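/- For p ∈ [1,∞), let ‖f‖_{*,p} be the least constant C₉ such that (μ(2Q)^{-1} ∫_Q |f − m_{Q̃} f|^p dμ)^{1/p} ≤ C₉ for every cube Q, and |m_Q f − m_R f| ≤ C₉·K_{Q,R} for all doubling cubes Q ⊂ R. Then for each p ∈ [1,∞) there is a constant C ≥ 1, depending only on p, d, n, C₀ and β_d, with C^{-1}·‖f‖_* ≤ ‖f‖_{*,p} ≤ C·‖f‖_* for all f ∈ L¹_loc(μ); in particular the spaces RBMO^p(μ), p ∈ [1,∞), all coincide with RBMO(μ). -/

import Mathlib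

/-!
Common definitions for formalizing Tolsa, "BMO, H¹, and Calderón–Zygmund
operators for non doubling measures".
-/

open MeasureTheory Metric Set Function
open scoped Classical
open scoped ENNReal NNReal BigOperators

noncomputable section

/-- `ℝ^d` with the Euclidean metric. -/
abbrev Euc (d : ℕ) := EuclideanSpace ℝ (Fin d)

variable {d : ℕ}

/-- The support of a measure: points all of whose balls have positive measure. -/
def measSupp (μ : MeasureTheory.Measure (Euc d)) : Set (Euc d) :=
  {x | ∀ r : ℝ, 0 < r → 0 < μ (Metric.ball x r)}

/-- The growth condition `μ(B(x,r)) ≤ C₀ rⁿ`. -/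
def GrowthBound (μ : MeasureTheory.Measure (Euc d)) (n : ℕ) (C₀ : ℝ) : Prop :=
  ∀ (x : Euc d) (r : ℝ), 0 < r → μ (Metric.ball x r) ≤ ENNReal.ofReal (C₀ * r ^ n)

/-- A (closed, axis-parallel) cube with center in the support of `μ` and positive
side length. -/
structure CubeOf (μ : MeasureTheory.Measure (Euc d)) where
  c : Euc d
  ℓ : ℝ
  ℓ_pos : 0 < ℓ
  c_mem : c ∈ measSupp μ

namespace CubeOf

variable {μ : MeasureTheory.Measure (Euc d)}

/-- The set of points of a cube. -/
def set (Q : CubeOf μ) : Set (Euc d) := {y | ∀ i, |y i - Q.c i| ≤ Q.ℓ / 2}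

/-- The concentric dilation `aQ` of a cube, as a set. -/
def dil (Q : CubeOf μ) (a : ℝ) : Set (Euc d) := {y | ∀ i, |y i - Q.c i| ≤ a * Q.ℓ / 2}

/-- The cube `2^k Q`. -/
def pow2 (Q : CubeOf μ) (k : ℕ) : CubeOf μ :=
  ⟨Q.c, 2 ^ k * Q.ℓ, mul_pos (by positivity) Q.ℓ_pos, Q.c_mem⟩

/-- The cube `6^k Q`. -/
def pow6 (Q : CubeOf μ) (k : ℕ) : CubeOf μ :=
  ⟨Q.c, 6 ^ k * Q.ℓ, mul_pos (by positivity) Q.ℓ_pos, Q.c_mem⟩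

end CubeOf

/-- `(α,β)`-doubling cube: `μ(αQ) ≤ β μ(Q)`. -/
def IsDoubling (μ : MeasureTheory.Measure (Euc d)) (α β : ℝ) (Q : CubeOf μ) : Prop :=
  μ (Q.dil α) ≤ ENNReal.ofReal β * μ Q.set

/-- `N_{Q,R}`: the first integer `k ≥ 1` such that `l(2^k Q) ≥ l(R)`. -/
def NQR {μ : MeasureTheory.Measure (Euc d)} (Q R : CubeOf μ) : ℕ :=
  sInf {k : ℕ | 1 ≤ k ∧ R.ℓ ≤ 2 ^ k * Q.ℓ}

/-- The coefficient `K_{Q,R} = 1 + ∑_{k=1}^{N_{Q,R}} μ(2^k Q)/l(2^k Q)^n`. -/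
def Kcoef {μ : MeasureTheory.Measure (Euc d)} (n : ℕ) (Q R : CubeOf μ) : ℝ :=
  1 + ∑ k ∈ Finset.Icc 1 (NQR Q R), (μ ((Q.pow2 k).set)).toReal / ((2 ^ k * Q.ℓ) ^ n)

/-- The smallest `N ≥ 0` such that `2^N Q` is `(2,βd)`-doubling. -/
def tildeIdx (μ : MeasureTheory.Measure (Euc d)) (βd : ℝ) (Q : CubeOf μ) : ℕ :=
  sInf {N : ℕ | IsDoubling μ 2 βd (Q.pow2 N)}

/-- The cube `Q̃`: the smallest cube `2^N Q`, `N ≥ 0`, which is `(2,βd)`-doubling. -/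
def CubeOf.tilde {μ : MeasureTheory.Measure (Euc d)} (Q : CubeOf μ) (βd : ℝ) : CubeOf μ :=
  Q.pow2 (tildeIdx μ βd Q)

/-- The mean `m_Q f` of `f` over the cube `Q` with respect to `μ`. -/
def mQ (μ : MeasureTheory.Measure (Euc d)) (Q : CubeOf μ) (f : Euc d → ℝ) : ℝ :=
  ⨍ x in Q.set, f x ∂μ

/-- For `μ`-a.e. `x` there are `(2,βd)`-doubling cubes centered at `x` of arbitrarily
small side length. -/
def SmallDoublingAE (μ : MeasureTheory.Measure (Euc d)) (βd : ℝ) : Prop :=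
  ∀ᵐ x ∂μ, ∀ ℓ₀ : ℝ, 0 < ℓ₀ → ∃ Q : CubeOf μ, Q.c = x ∧ Q.ℓ < ℓ₀ ∧ IsDoubling μ 2 βd Q

/-- `C` is an admissible constant in the definition of the `RBMO(μ)` norm of `f`. -/
def RBMOBoundWith (μ : MeasureTheory.Measure (Euc d)) (n : ℕ) (βd : ℝ)
    (f : Euc d → ℝ) (C : ℝ≥0∞) : Prop :=
  (∀ Q : CubeOf μ,
    ∫⁻ x in Q.set, ENNReal.ofReal |f x - mQ μ (Q.tilde βd) f| ∂μ ≤ C * μ (Q.dil 2)) ∧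
  (∀ Q R : CubeOf μ, Q.set ⊆ R.set → IsDoubling μ 2 βd Q → IsDoubling μ 2 βd R →
    ENNReal.ofReal |mQ μ Q f - mQ μ R f| ≤ C * ENNReal.ofReal (Kcoef n Q R))

/-- The `RBMO(μ)` norm `‖f‖_*` (with value `∞` if `f ∉ RBMO(μ)`). -/
def rbmoNorm (μ : MeasureTheory.Measure (Euc d)) (n : ℕ) (βd : ℝ) (f : Euc d → ℝ) : ℝ≥0∞ :=
  sInf {C | RBMOBoundWith μ n βd f C}

/-- The conditions defining `‖f‖_{**,(ρ)}`, for a given family of numbers `fQ`. -/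
def StarStarBoundWith (μ : MeasureTheory.Measure (Euc d)) (n : ℕ) (ρ : ℝ)
    (f : Euc d → ℝ) (fQ : CubeOf μ → ℝ) (C : ℝ≥0∞) : Prop :=
  (∀ Q : CubeOf μ, ∫⁻ x in Q.set, ENNReal.ofReal |f x - fQ Q| ∂μ ≤ C * μ (Q.dil ρ)) ∧
  (∀ Q R : CubeOf μ, Q.set ⊆ R.set →
    ENNReal.ofReal |fQ Q - fQ R| ≤ C * ENNReal.ofReal (Kcoef n Q R))

/-- The norm `‖f‖_{**,(ρ)}`. -/
def starStarNorm (μ : MeasureTheory.Measure (Euc d)) (n : ℕ) (ρ : ℝ) (f : Euc d → ℝ) : ℝ≥0∞ :=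
  sInf {C | ∃ fQ : CubeOf μ → ℝ, StarStarBoundWith μ n ρ f fQ C}

end

noncomputable section

variable {d : ℕ}

/-- The conditions defining the `RBMO^p(μ)` norm. -/
def RBMOpBoundWith (μ : MeasureTheory.Measure (Euc d)) (n : ℕ) (βd : ℝ) (p : ℝ)
    (f : Euc d → ℝ) (C : ℝ≥0∞) : Prop :=
  (∀ Q : CubeOf μ,
    ∫⁻ x in Q.set, ENNReal.ofReal |f x - mQ μ (Q.tilde βd) f| ^ p ∂μ ≤ C ^ p * μ (Q.dil 2)) ∧
  (∀ Q R : CubeOf μ, Q.set ⊆ R.set → IsDoubling μ 2 βd Q → IsDoubling μ 2 βd R →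
    ENNReal.ofReal |mQ μ Q f - mQ μ R f| ≤ C * ENNReal.ofReal (Kcoef n Q R))

/-- The `RBMO^p(μ)` norm `‖f‖_{*,p}`. -/
def rbmoPNorm (μ : MeasureTheory.Measure (Euc d)) (n : ℕ) (βd : ℝ) (p : ℝ)
    (f : Euc d → ℝ) : ℝ≥0∞ :=
  sInf {C | RBMOpBoundWith μ n βd p f C}

/-- Condition (b) of Lemma `fifi` of the paper, with constant `Cb`. -/
def CondB (μ : MeasureTheory.Measure (Euc d)) (n : ℕ) (ρ : ℝ)
    (f : Euc d → ℝ) (Cb : ℝ≥0∞) : Prop :=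
  (∀ Q : CubeOf μ, ∫⁻ x in Q.set, ENNReal.ofReal |f x - mQ μ Q f| ∂μ ≤ Cb * μ (Q.dil ρ)) ∧
  (∀ Q R : CubeOf μ, Q.set ⊆ R.set →
    ENNReal.ofReal |mQ μ Q f - mQ μ R f| ≤
      Cb * ENNReal.ofReal (Kcoef n Q R) * (μ (Q.dil ρ) / μ Q.set + μ (R.dil ρ) / μ R.set))

/-- Condition (c) of Lemma `fifi` of the paper, with constant `Cc`. -/
def CondC (μ : MeasureTheory.Measure (Euc d)) (n : ℕ) (βd : ℝ)
    (f : Euc d → ℝ) (Cc : ℝ≥0∞) : Prop :=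
  (∀ Q : CubeOf μ, IsDoubling μ 2 βd Q →
    ∫⁻ x in Q.set, ENNReal.ofReal |f x - mQ μ Q f| ∂μ ≤ Cc * μ Q.set) ∧
  (∀ Q R : CubeOf μ, Q.set ⊆ R.set → IsDoubling μ 2 βd Q → IsDoubling μ 2 βd R →
    ENNReal.ofReal |mQ μ Q f - mQ μ R f| ≤ Cc * ENNReal.ofReal (Kcoef n Q R))

/-- The conditions defining the norm `‖f‖_∘`, relative to a choice `αQ` of minimizers. -/
def CircBoundWith (μ : MeasureTheory.Measure (Euc d)) (n : ℕ) (βd : ℝ)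
    (f : Euc d → ℝ) (αQ : CubeOf μ → ℝ) (C : ℝ≥0∞) : Prop :=
  (∀ Q : CubeOf μ,
    ∫⁻ x in Q.set, ENNReal.ofReal |f x - αQ (Q.tilde βd)| ∂μ ≤ C * μ (Q.dil 2)) ∧
  (∀ Q R : CubeOf μ, Q.set ⊆ R.set → IsDoubling μ 2 βd Q → IsDoubling μ 2 βd R →
    ENNReal.ofReal |αQ Q - αQ R| ≤ C * ENNReal.ofReal (Kcoef n Q R))

/-- The norm `‖f‖_∘`, relative to a choice `αQ` of minimizers. -/
def circNorm (μ : MeasureTheory.Measure (Euc d)) (n : ℕ) (βd : ℝ)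
    (f : Euc d → ℝ) (αQ : CubeOf μ → ℝ) : ℝ≥0∞ :=
  sInf {C | CircBoundWith μ n βd f αQ C}

/-- An atomic block: a function supported on a cube `R`, with zero integral, of the
form `b = ∑ λⱼ aⱼ` with `aⱼ` supported on cubes `Qⱼ ⊆ R` and
`‖aⱼ‖_{L∞(μ)} ≤ (μ(2Qⱼ) K_{Qⱼ,R})⁻¹`. -/
structure AtomicBlock (μ : MeasureTheory.Measure (Euc d)) (n : ℕ) where
  b : Euc d → ℝ
  R : CubeOf μ
  lam : ℕ → ℝ
  a : ℕ → Euc d → ℝ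
  Qj : ℕ → CubeOf μ
  integrable : MeasureTheory.Integrable b μ
  supp_b : ∀ x ∉ R.set, b x = 0
  int_zero : ∫ x, b x ∂μ = 0
  Qj_sub : ∀ j, (Qj j).set ⊆ R.set
  a_supp : ∀ j, ∀ x ∉ (Qj j).set, a j x = 0
  a_meas : ∀ j, MeasureTheory.AEStronglyMeasurable (a j) μ
  a_bound : ∀ j, MeasureTheory.eLpNorm (a j) ⊤ μ ≤
    (μ ((Qj j).dil 2) * ENNReal.ofReal (Kcoef n (Qj j) R))⁻¹
  lam_summable : Summable fun j => |lam j|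
  b_eq : ∀ᵐ x ∂μ, HasSum (fun j => lam j * a j x) (b x)

/-- `|b|_{H^{1,∞}_atb(μ)} = ∑ⱼ |λⱼ|` for the given decomposition. -/
def AtomicBlock.size {μ : MeasureTheory.Measure (Euc d)} {n : ℕ}
    (B : AtomicBlock μ n) : ℝ :=
  ∑' j, |B.lam j|

/-- The `H^{1,∞}_atb(μ)` norm (with value `∞` outside the space). -/
def hatbNorm (μ : MeasureTheory.Measure (Euc d)) (n : ℕ) (f : Euc d → ℝ) : ℝ≥0∞ :=
  sInf {t : ℝ≥0∞ | ∃ B : ℕ → AtomicBlock μ n,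
    (∀ᵐ x ∂μ, HasSum (fun i => (B i).b x) (f x)) ∧
    t = ∑' i, ENNReal.ofReal ((B i).size)}

/-- A `p`-atomic block: like an atomic block, but with the size condition
`‖aⱼ‖_{L^p(μ)} ≤ μ(2Qⱼ)^{1/p-1} K_{Qⱼ,R}⁻¹`. -/
structure PAtomicBlock (μ : MeasureTheory.Measure (Euc d)) (n : ℕ) (p : ℝ) where
  b : Euc d → ℝ
  R : CubeOf μ
  lam : ℕ → ℝ
  a : ℕ → Euc d → ℝ
  Qj : ℕ → CubeOf μ
  integrable : MeasureTheory.Integrable b μ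
  supp_b : ∀ x ∉ R.set, b x = 0
  int_zero : ∫ x, b x ∂μ = 0
  Qj_sub : ∀ j, (Qj j).set ⊆ R.set
  a_supp : ∀ j, ∀ x ∉ (Qj j).set, a j x = 0
  a_meas : ∀ j, MeasureTheory.AEStronglyMeasurable (a j) μ
  a_bound : ∀ j, MeasureTheory.eLpNorm (a j) (ENNReal.ofReal p) μ ≤
    μ ((Qj j).dil 2) ^ (1 / p - 1) * (ENNReal.ofReal (Kcoef n (Qj j) R))⁻¹
  lam_summable : Summable fun j => |lam j|
  b_eq : ∀ᵐ x ∂μ, HasSum (fun j => lam j * a j x) (b x)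

/-- `|b|_{H^{1,p}_atb(μ)} = ∑ⱼ |λⱼ|` for the given decomposition. -/
def PAtomicBlock.size {μ : MeasureTheory.Measure (Euc d)} {n : ℕ} {p : ℝ}
    (B : PAtomicBlock μ n p) : ℝ :=
  ∑' j, |B.lam j|

/-- The `H^{1,p}_atb(μ)` norm (with value `∞` outside the space). -/
def hatbPNorm (μ : MeasureTheory.Measure (Euc d)) (n : ℕ) (p : ℝ) (f : Euc d → ℝ) : ℝ≥0∞ :=
  sInf {t : ℝ≥0∞ | ∃ B : ℕ → PAtomicBlock μ n p,
    (∀ᵐ x ∂μ, HasSum (fun i => (B i).b x) (f x)) ∧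
    t = ∑' i, ENNReal.ofReal ((B i).size)}

/-- A Calderón–Zygmund kernel of dimension `n`, with constant `Ck` and Hölder
exponent `δ`. -/
def CZKernelBound (n : ℕ) (k : Euc d → Euc d → ℝ) (Ck δ : ℝ) : Prop :=
  (∀ x y : Euc d, x ≠ y → |k x y| ≤ Ck / dist x y ^ (n : ℝ)) ∧
  (∀ x x' y : Euc d, x ≠ y → dist x x' ≤ dist x y / 2 →
    |k x y - k x' y| + |k y x - k y x'| ≤ Ck * dist x x' ^ δ / dist x y ^ ((n : ℝ) + δ))

/-- The truncated operator `T_ε f(x) = ∫_{|x-y|>ε} k(x,y) f(y) dμ(y)`. -/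
def trunc (μ : MeasureTheory.Measure (Euc d)) (k : Euc d → Euc d → ℝ) (ε : ℝ)
    (f : Euc d → ℝ) (x : Euc d) : ℝ :=
  ∫ y in {y | ε < dist x y}, k x y * f y ∂μ

/-- The non-centered doubling maximal operator `N`. -/
def Nop (μ : MeasureTheory.Measure (Euc d)) (βd : ℝ) (f : Euc d → ℝ) (x : Euc d) : ℝ≥0∞ :=
  ⨆ (Q : CubeOf μ) (_ : x ∈ Q.set) (_ : IsDoubling μ 2 βd Q),
    (∫⁻ y in Q.set, ENNReal.ofReal |f y| ∂μ) / μ Q.set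

/-- The sharp maximal operator `M^♯`. -/
def Msharp (μ : MeasureTheory.Measure (Euc d)) (n : ℕ) (βd : ℝ)
    (f : Euc d → ℝ) (x : Euc d) : ℝ≥0∞ :=
  (⨆ (Q : CubeOf μ) (_ : x ∈ Q.set),
    (∫⁻ y in Q.set, ENNReal.ofReal |f y - mQ μ (Q.tilde βd) f| ∂μ) / μ (Q.dil (3/2))) +
  ⨆ (Q : CubeOf μ) (R : CubeOf μ) (_ : x ∈ Q.set) (_ : Q.set ⊆ R.set)
      (_ : IsDoubling μ 2 βd Q) (_ : IsDoubling μ 2 βd R),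
    ENNReal.ofReal (|mQ μ Q f - mQ μ R f| / Kcoef n Q R)

/-- The weight functions `w_i = χ_{Q_i} / ∑_k χ_{Q_k}` of the Calderón–Zygmund
decomposition. -/
def czWeight {μ : MeasureTheory.Measure (Euc d)} (J : Finset ℕ) (Q : ℕ → CubeOf μ)
    (i : ℕ) (x : Euc d) : ℝ :=
  Set.indicator (Q i).set
    (fun y => (((J.filter fun kk => y ∈ (Q kk).set).card : ℝ))⁻¹) x

/-- The smallest `(6,6^{n+1})`-doubling cube of the form `6^k Q`, `k ≥ 1`. -/
def smallest6Doubling (μ : MeasureTheory.Measure (Euc d)) (n : ℕ) (Q : CubeOf μ) : CubeOf μ :=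
  Q.pow6 (sInf {k : ℕ | 1 ≤ k ∧ IsDoubling μ 6 (6 ^ (n + 1)) (Q.pow6 k)})

end

/-!
`‖f‖_* ≤ ‖f‖_{*,p}` is Hölder's inequality together with `μ(Q) ≤ μ(2Q)`. The converse bound is the
integral against `p t^(p-1) dt` of a John-Nirenberg inequality:
`μ {x ∈ Q | t < |f x - m_{Q̃} f|} ≤ 2 exp (-c t / ‖f‖_*) μ(2Q)`.

Let `B` be a large multiple of `‖f‖_*`. Almost every point of `Q` where `|f - m_{Q̃} f| > B` is the
centre of tiny doubling cubes `P` with `|m_P f - m_{Q̃} f| > B`; stop at the largest `2^k P` that is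
still doubling, small compared to `Q`, and has this property. Nearby cubes have doubling dilations
inside a common cube with bounded coefficients `K`, so their means differ by `O(‖f‖_*)`, and
maximality keeps the mean over the stopping cube within `B + O(‖f‖_*)` of `m_{Q̃} f`. By
Besicovitch's covering theorem boundedly many disjoint families of stopping cubes suffice, and
Chebyshev's inequality and doubling bound the sum of their `μ(2P)` by `μ(2Q) / 2`. Hence raising
the level by `B + O(‖f‖_*)` halves the measure, uniformly in `Q`.
-/

section Boxes

variable {d : ℕ}

/-- The closed cube with centre `x` and side length `l`, where, in contrast to `CubeOf`, the centre
is arbitrary. -/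
def box (x : Euc d) (l : ℝ) : Set (Euc d) := {y | ∀ i, |y i - x i| ≤ l / 2}

theorem isClosed_box (x : Euc d) (l : ℝ) : IsClosed (box x l) := by
  simp only [box, Set.ofPred_forall]
  exact isClosed_iInter fun i => isClosed_le (by fun_prop) continuous_const

theorem measurableSet_box (x : Euc d) (l : ℝ) : MeasurableSet (box x l) :=
  (isClosed_box x l).measurableSet

theorem box_subset_box {x y : Euc d} {l l' s : ℝ} (hs : ∀ i, |x i - y i| ≤ s)
    (h : l' / 2 + s ≤ l / 2) : box y l' ⊆ box x l := fun z hz i => by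
  have := abs_sub_le (z i) (y i) (x i)
  have := abs_sub_comm (x i) (y i)
  linarith [hz i, hs i]

theorem box_subset_box_of_le (x : Euc d) {l l' : ℝ} (h : l' ≤ l) : box x l' ⊆ box x l :=
  box_subset_box (s := 0) (by simp) (by linarith)

theorem box_subset_ball (x : Euc d) {l : ℝ} (hl : 0 < l) : box x l ⊆ ball x ((d + 1) * l) := by
  intro y hy
  have hsum : ∑ i, dist (y i) (x i) ^ 2 ≤ d * (l / 2) ^ 2 := by
    simpa using Finset.sum_le_card_nsmul Finset.univ _ _
      fun i _ => pow_le_pow_left₀ dist_nonneg (hy i) 2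
  have : (0 : ℝ) ≤ d := d.cast_nonneg
  rw [mem_ball, EuclideanSpace.dist_eq, Real.sqrt_lt' (by positivity)]
  nlinarith [pow_pos hl 2]

theorem ball_subset_box (x : Euc d) (l : ℝ) : ball x (l / 2) ⊆ box x l := fun y hy i => by
  rw [← Real.norm_eq_abs, ← PiLp.sub_apply]
  exact (PiLp.norm_apply_le (y - x) i).trans (mem_ball_iff_norm.1 hy).le

theorem box_eq_preimage_closedBall (x : Euc d) {l : ℝ} (hl : 0 ≤ l) :
    box x l = PiLp.homeomorph 2 (fun _ : Fin d => ℝ) ⁻¹'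
      closedBall (PiLp.homeomorph 2 (fun _ : Fin d => ℝ) x) (l / 2) := by
  ext y
  rw [mem_preimage, mem_closedBall, dist_pi_le_iff (by positivity)]
  rfl

theorem exists_fin_abs_sub_le {k : ℕ} (hk : 0 < k) {l t : ℝ} (hl : 0 < l) (ht : |t| ≤ l / 2) :
    ∃ j : Fin k, |t - ((j + 1 / 2) * (l / k) - l / 2)| ≤ l / k / 2 := by
  have hk' : (0 : ℝ) < k := Nat.cast_pos.2 hk
  set s := (t + l / 2) / (l / k) with hs
  have hts : t = s * (l / k) - l / 2 := by rw [hs]; field_simp; ring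
  obtain ⟨hs0, hsk⟩ : 0 ≤ s ∧ s ≤ k := by
    rw [abs_le] at ht
    refine ⟨div_nonneg (by linarith) (by positivity), (div_le_iff₀ (by positivity)).2 ?_⟩
    rw [mul_div_cancel₀ _ hk'.ne']
    linarith
  obtain ⟨j, hj0, hj1⟩ : ∃ j : Fin k, (j : ℝ) ≤ s ∧ s ≤ j + 1 := by
    rcases hsk.eq_or_lt with heq | hlt
    · exact ⟨⟨k - 1, by omega⟩, by simp [Nat.cast_pred hk, heq], by simp [Nat.cast_pred hk, heq]⟩
    · exact ⟨⟨⌊s⌋₊, (Nat.floor_lt hs0).2 hlt⟩, Nat.floor_le hs0, (Nat.lt_floor_add_one s).le⟩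
  refine ⟨j, ?_⟩
  have hle : |s - (j + 1 / 2)| ≤ 1 / 2 := abs_le.2 ⟨by linarith, by linarith⟩
  calc |t - ((j + 1 / 2) * (l / k) - l / 2)| = |s - (j + 1 / 2)| * (l / k) := by
        rw [hts, ← abs_of_pos (show 0 < l / k by positivity), ← abs_mul,
          abs_of_pos (show 0 < l / k by positivity)]
        congr 1
        ring
    _ ≤ 1 / 2 * (l / k) := by gcongr
    _ = l / k / 2 := by ring

theorem box_subset_iUnion_box {k : ℕ} (hk : 0 < k) (x : Euc d) {l : ℝ} (hl : 0 < l) :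
    box x l ⊆ ⋃ j : Fin d → Fin k,
      box (WithLp.toLp 2 fun i => x i + ((j i + 1 / 2) * (l / k) - l / 2)) (l / k) := by
  intro y hy
  choose j hj using fun i => exists_fin_abs_sub_le hk hl (hy i)
  exact mem_iUnion.2 ⟨j, fun i => by simpa only [← sub_sub] using hj i⟩

theorem measSupp_eq_support (μ : Measure (Euc d)) : measSupp μ = μ.support :=
  Set.ext fun _ => nhds_basis_ball.mem_measureSupport.symm

theorem ae_mem_measSupp (μ : Measure (Euc d)) : ∀ᵐ x ∂μ, x ∈ measSupp μ := by
  rw [measSupp_eq_support]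
  exact Measure.support_mem_ae

theorem lintegral_box_le_of_forall_subbox {μ : Measure (Euc d)} {g : Euc d → ℝ≥0∞} {x : Euc d}
    {l : ℝ} (hl : 0 < l) {k : ℕ} (hk : 0 < k) {M : ℝ≥0∞}
    (h : ∀ y ∈ measSupp μ, y ∈ box x l → ∫⁻ z in box y (2 * (l / k)), g z ∂μ ≤ M) :
    ∫⁻ z in box x l, g z ∂μ ≤ k ^ d * M := by
  set B : (Fin d → Fin k) → Set (Euc d) := fun j =>
    box (WithLp.toLp 2 fun i => x i + ((j i + 1 / 2) * (l / k) - l / 2)) (l / k)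
  have hcover : box x l ≤ᵐ[μ] ⋃ j, box x l ∩ B j ∩ measSupp μ := by
    filter_upwards [ae_mem_measSupp μ] with z hz hzx
    obtain ⟨j, hj⟩ := mem_iUnion.1 (box_subset_iUnion_box hk x hl hzx)
    exact mem_iUnion.2 ⟨j, ⟨hzx, hj⟩, hz⟩
  have hcell : ∀ j, ∫⁻ z in box x l ∩ B j ∩ measSupp μ, g z ∂μ ≤ M := fun j => by
    rcases (box x l ∩ B j ∩ measSupp μ).eq_empty_or_nonempty with hempty | ⟨y, ⟨hyx, hyj⟩, hy⟩
    · simp [hempty]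
    · refine (lintegral_mono_set fun z hz => ?_).trans (h y hy hyx)
      exact box_subset_box (fun i => hyj i) (by linarith) hz.1.2
  calc ∫⁻ z in box x l, g z ∂μ
      ≤ ∑' j, ∫⁻ z in box x l ∩ B j ∩ measSupp μ, g z ∂μ :=
        (lintegral_mono_set' hcover).trans (lintegral_iUnion_le _ _)
    _ ≤ ∑' _ : Fin d → Fin k, M := ENNReal.tsum_le_tsum hcell
    _ = k ^ d * M := by simp [tsum_fintype]

end Boxes

section Growth

variable {d n : ℕ} {μ : Measure (Euc d)} {C₀ : ℝ}

theorem GrowthBound.measure_box_le (hg : GrowthBound μ n C₀) (x : Euc d) {l : ℝ} (hl : 0 < l) :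
    μ (box x l) ≤ ENNReal.ofReal (C₀ * (d + 1) ^ n * l ^ n) := by
  rw [mul_assoc, ← mul_pow]
  exact (measure_mono (box_subset_ball x hl)).trans (hg x _ (by positivity))

theorem GrowthBound.measure_box_lt_top (hg : GrowthBound μ n C₀) (x : Euc d) (l : ℝ) :
    μ (box x l) < ⊤ :=
  (measure_mono (box_subset_box_of_le x (le_max_left l 1))).trans_lt
    ((hg.measure_box_le x (by positivity)).trans_lt ENNReal.ofReal_lt_top)

theorem GrowthBound.isLocallyFiniteMeasure (hg : GrowthBound μ n C₀) :
    IsLocallyFiniteMeasure μ :=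
  ⟨fun x => ⟨ball x 1, ball_mem_nhds x one_pos,
    (hg x 1 one_pos).trans_lt ENNReal.ofReal_lt_top⟩⟩

theorem measure_box_pos {x : Euc d} (hx : x ∈ measSupp μ) {l : ℝ} (hl : 0 < l) :
    0 < μ (box x l) :=
  (hx (l / 2) (by positivity)).trans_le (measure_mono (ball_subset_box x l))

end Growth

section Density

variable {d n : ℕ} {μ : Measure (Euc d)} {C₀ βd : ℝ}

namespace CubeOf

theorem set_eq_box (Q : CubeOf μ) : Q.set = box Q.c Q.ℓ := rfl

theorem dil_eq_box (Q : CubeOf μ) (a : ℝ) : Q.dil a = box Q.c (a * Q.ℓ) := rfl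

@[simp] theorem pow2_c (Q : CubeOf μ) (k : ℕ) : (Q.pow2 k).c = Q.c := rfl

@[simp] theorem pow2_ℓ (Q : CubeOf μ) (k : ℕ) : (Q.pow2 k).ℓ = 2 ^ k * Q.ℓ := rfl

theorem pow2_zero (Q : CubeOf μ) : Q.pow2 0 = Q := by
  cases Q
  simp [pow2]

theorem pow2_pow2 (Q : CubeOf μ) (j k : ℕ) : (Q.pow2 j).pow2 k = Q.pow2 (j + k) := by
  simp only [pow2, pow_add]
  congr 1
  ring

theorem dil_two (Q : CubeOf μ) : Q.dil 2 = (Q.pow2 1).set := by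
  simp [dil_eq_box, set_eq_box]

theorem measurableSet_set (Q : CubeOf μ) : MeasurableSet Q.set := measurableSet_box _ _

theorem set_subset_dil_two (Q : CubeOf μ) : Q.set ⊆ Q.dil 2 :=
  box_subset_box_of_le _ (by linarith [Q.ℓ_pos])

theorem measure_set_pos (Q : CubeOf μ) : 0 < μ Q.set := measure_box_pos Q.c_mem Q.ℓ_pos

theorem measure_set_ne_top (hg : GrowthBound μ n C₀) (Q : CubeOf μ) : μ Q.set ≠ ⊤ :=
  (hg.measure_box_lt_top _ _).ne

/-- The `n`-dimensional density `μ(Q) / l(Q)ⁿ`, of which the coefficients `K_{Q,R}` are sums. -/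
noncomputable def density (n : ℕ) (Q : CubeOf μ) : ℝ := (μ Q.set).toReal / Q.ℓ ^ n

theorem density_nonneg (Q : CubeOf μ) : 0 ≤ Q.density n :=
  div_nonneg ENNReal.toReal_nonneg (pow_nonneg Q.ℓ_pos.le n)

theorem density_pos (hg : GrowthBound μ n C₀) (Q : CubeOf μ) : 0 < Q.density n :=
  div_pos (ENNReal.toReal_pos Q.measure_set_pos.ne' (Q.measure_set_ne_top hg)) (pow_pos Q.ℓ_pos n)

end CubeOf

theorem GrowthBound.pos (hg : GrowthBound μ n C₀) (Q : CubeOf μ) : 0 < C₀ := by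
  have h : 0 < C₀ * (d + 1) ^ n * Q.ℓ ^ n :=
    ENNReal.ofReal_pos.1 (Q.measure_set_pos.trans_le (hg.measure_box_le Q.c Q.ℓ_pos))
  have := Q.ℓ_pos
  rw [mul_assoc] at h
  exact pos_of_mul_pos_left h (by positivity)

namespace CubeOf

theorem density_le (hg : GrowthBound μ n C₀) (Q : CubeOf μ) :
    Q.density n ≤ C₀ * (d + 1) ^ n := by
  have := Q.ℓ_pos
  have := hg.pos Q
  rw [density, div_le_iff₀ (by positivity)]
  exact ENNReal.toReal_le_of_le_ofReal (by positivity) (hg.measure_box_le Q.c Q.ℓ_pos)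

theorem density_le_of_subset (hg : GrowthBound μ n C₀) {Q R : CubeOf μ} (h : R.set ⊆ Q.set)
    {a : ℝ} (ha : Q.ℓ ≤ a * R.ℓ) : R.density n ≤ a ^ n * Q.density n := by
  have hQ := Q.ℓ_pos
  have hR := R.ℓ_pos
  have hμ : (μ R.set).toReal ≤ (μ Q.set).toReal :=
    ENNReal.toReal_mono (Q.measure_set_ne_top hg) (measure_mono h)
  have hℓ : Q.ℓ ^ n ≤ a ^ n * R.ℓ ^ n := by
    rw [← mul_pow]
    exact pow_le_pow_left₀ hQ.le ha n
  rw [density, density, mul_div_assoc', div_le_div_iff₀ (by positivity) (by positivity)]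
  calc (μ R.set).toReal * Q.ℓ ^ n ≤ (μ Q.set).toReal * (a ^ n * R.ℓ ^ n) := by gcongr
    _ = a ^ n * (μ Q.set).toReal * R.ℓ ^ n := by ring

theorem density_le_of_not_isDoubling (hg : GrowthBound μ n C₀) (hβ : 0 < βd) {Q : CubeOf μ}
    (h : ¬ IsDoubling μ 2 βd Q) : Q.density n ≤ 2 ^ n / βd * (Q.pow2 1).density n := by
  have hℓ := Q.ℓ_pos
  have hμ : βd * (μ Q.set).toReal ≤ (μ (Q.pow2 1).set).toReal := by
    rw [IsDoubling, not_le, dil_two] at h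
    rw [← ENNReal.toReal_ofReal hβ.le, ← ENNReal.toReal_mul]
    exact ENNReal.toReal_mono ((Q.pow2 1).measure_set_ne_top hg) h.le
  calc Q.density n = 2 ^ n / βd * (βd * (μ Q.set).toReal / (2 ^ n * Q.ℓ ^ n)) := by
        rw [density]
        field_simp
    _ ≤ 2 ^ n / βd * ((μ (Q.pow2 1).set).toReal / (2 ^ n * Q.ℓ ^ n)) := by gcongr
    _ = 2 ^ n / βd * (Q.pow2 1).density n := by rw [density, pow2_ℓ, pow_one, mul_pow]

theorem density_pow2_le_of_not_isDoubling (hg : GrowthBound μ n C₀) (hβ : 0 < βd) {Q : CubeOf μ}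
    {k : ℕ} (h : ¬ IsDoubling μ 2 βd (Q.pow2 k)) :
    (Q.pow2 k).density n ≤ 2 ^ n / βd * (Q.pow2 (k + 1)).density n :=
  pow2_pow2 Q k 1 ▸ density_le_of_not_isDoubling hg hβ h

theorem exists_isDoubling_pow2 (hg : GrowthBound μ n C₀) (hβ : 2 ^ n < βd) (Q : CubeOf μ) :
    ∃ k, IsDoubling μ 2 βd (Q.pow2 k) := by
  by_contra! hnot
  have hβ₀ : 0 < βd := lt_trans (by positivity) hβ
  have hgrow : ∀ k, βd / 2 ^ n * (Q.pow2 k).density n ≤ (Q.pow2 (k + 1)).density n := fun k => by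
    have := density_pow2_le_of_not_isDoubling hg hβ₀ (hnot k)
    rw [div_mul_eq_mul_div, le_div_iff₀ hβ₀] at this
    rwa [div_mul_eq_mul_div, div_le_iff₀' (by positivity), mul_comm βd]
  obtain ⟨k, hk⟩ := pow_unbounded_of_one_lt (C₀ * (d + 1) ^ n / Q.density n)
    ((one_lt_div (by positivity)).2 hβ)
  rw [div_lt_iff₀ (Q.density_pos hg)] at hk
  refine hk.not_ge ?_
  calc (βd / 2 ^ n) ^ k * Q.density n = (βd / 2 ^ n) ^ k * (Q.pow2 0).density n := by rw [pow2_zero]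
    _ ≤ (Q.pow2 k).density n :=
      geom_le (u := fun k => (Q.pow2 k).density n) (by positivity) k fun j _ => hgrow j
    _ ≤ C₀ * (d + 1) ^ n := density_le hg _

theorem isDoubling_tilde (hg : GrowthBound μ n C₀) (hβ : 2 ^ n < βd) (Q : CubeOf μ) :
    IsDoubling μ 2 βd (Q.tilde βd) :=
  Nat.sInf_mem (exists_isDoubling_pow2 hg hβ Q)

theorem tildeIdx_le {Q : CubeOf μ} {k : ℕ} (h : IsDoubling μ 2 βd (Q.pow2 k)) :
    tildeIdx μ βd Q ≤ k :=
  Nat.sInf_le h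

theorem tilde_eq_self {Q : CubeOf μ} (h : IsDoubling μ 2 βd Q) : Q.tilde βd = Q := by
  have : tildeIdx μ βd Q = 0 := Nat.le_zero.1 (tildeIdx_le (Q.pow2_zero.symm ▸ h))
  rw [tilde, this, pow2_zero]

theorem tilde_pow2 {Q : CubeOf μ} (h : IsDoubling μ 2 βd (Q.tilde βd)) {k : ℕ}
    (hk : k ≤ tildeIdx μ βd Q) : (Q.pow2 k).tilde βd = Q.tilde βd := by
  have hidx : tildeIdx μ βd (Q.pow2 k) = tildeIdx μ βd Q - k := by
    have hmem : IsDoubling μ 2 βd ((Q.pow2 k).pow2 (tildeIdx μ βd Q - k)) := by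
      rwa [pow2_pow2, Nat.add_sub_cancel' hk]
    have hdbl : IsDoubling μ 2 βd ((Q.pow2 k).tilde βd) :=
      Nat.sInf_mem (s := {N | IsDoubling μ 2 βd ((Q.pow2 k).pow2 N)}) ⟨_, hmem⟩
    rw [tilde, pow2_pow2] at hdbl
    have := tildeIdx_le hdbl
    have := tildeIdx_le hmem
    omega
  rw [tilde, hidx, pow2_pow2, Nat.add_sub_cancel' hk]
  rfl

end CubeOf

theorem sum_range_succ_le_of_le_mul_succ {u : ℕ → ℝ} {r M : ℝ} (hr₀ : 0 ≤ r) (hr : r < 1)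
    (hu : ∀ k, 0 ≤ u k) {N : ℕ} (h : ∀ k < N, u k ≤ r * u (k + 1)) (hM : u N ≤ M) :
    ∑ k ∈ Finset.range (N + 1), u k ≤ M / (1 - r) := by
  rw [le_div_iff₀ (by linarith)]
  refine le_trans ?_ hM
  clear hM
  induction N with
  | zero => simpa using mul_le_of_le_one_right (hu 0) (by linarith)
  | succ N ih =>
    have := ih fun k hk => h k (by omega)
    have := h N N.lt_succ_self
    rw [Finset.sum_range_succ, add_mul]
    linarith

/-- A common bound for the densities of all cubes and for the sums of the densities of the cubes
`2^k Q`, `0 ≤ k ≤ tildeIdx μ βd Q`; the latter are dominated by a geometric series of ratio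
`2ⁿ / βd`. -/
noncomputable def densityBound (d n : ℕ) (C₀ βd : ℝ) : ℝ := C₀ * (d + 1) ^ n / (1 - 2 ^ n / βd)

namespace CubeOf

theorem sum_density_le_densityBound (hg : GrowthBound μ n C₀) (hβ : 2 ^ n < βd) (Q : CubeOf μ) :
    ∑ k ∈ Finset.range (tildeIdx μ βd Q + 1), (Q.pow2 k).density n ≤ densityBound d n C₀ βd := by
  have hβ₀ : 0 < βd := lt_trans (by positivity) hβ
  exact sum_range_succ_le_of_le_mul_succ (by positivity) ((div_lt_one hβ₀).2 hβ)
    (fun k => density_nonneg _)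
    (fun k hk => density_pow2_le_of_not_isDoubling hg hβ₀ fun hdbl => hk.not_ge (tildeIdx_le hdbl))
    (density_le hg _)

theorem density_le_densityBound (hg : GrowthBound μ n C₀) (hβ : 2 ^ n < βd) (Q : CubeOf μ) :
    Q.density n ≤ densityBound d n C₀ βd := by
  rw [← Q.pow2_zero]
  exact (Finset.single_le_sum (f := fun k => (Q.pow2 k).density n) (fun k _ => density_nonneg _)
    (Finset.mem_range.2 (Nat.succ_pos _))).trans (sum_density_le_densityBound hg hβ Q)

end CubeOf

end Density

section Near

variable {d n : ℕ} {μ : Measure (Euc d)} {C₀ βd : ℝ}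

namespace CubeOf

/-- Two cubes are `m`-near if their side lengths are comparable up to the factor `2^m` and the
sup-norm distance of their centres is at most `2^m` times either side length. -/
structure Near (m : ℕ) (Q R : CubeOf μ) : Prop where
  left_le : Q.ℓ ≤ 2 ^ m * R.ℓ
  right_le : R.ℓ ≤ 2 ^ m * Q.ℓ
  abs_sub_le_left : ∀ i, |Q.c i - R.c i| ≤ 2 ^ m * Q.ℓ
  abs_sub_le_right : ∀ i, |Q.c i - R.c i| ≤ 2 ^ m * R.ℓ

theorem Near.symm {m : ℕ} {Q R : CubeOf μ} (h : Q.Near m R) : R.Near m Q where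
  left_le := h.right_le
  right_le := h.left_le
  abs_sub_le_left i := abs_sub_comm (Q.c i) (R.c i) ▸ h.abs_sub_le_right i
  abs_sub_le_right i := abs_sub_comm (Q.c i) (R.c i) ▸ h.abs_sub_le_left i

theorem pow2_set_subset (Q : CubeOf μ) {j k : ℕ} (h : j ≤ k) : (Q.pow2 j).set ⊆ (Q.pow2 k).set :=
  box_subset_box_of_le _ <|
    mul_le_mul_of_nonneg_right (pow_le_pow_right₀ one_le_two h) Q.ℓ_pos.le

theorem Near.pow2_set_subset {m : ℕ} {Q R : CubeOf μ} (h : Q.Near m R) (j : ℕ) :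
    (R.pow2 j).set ⊆ (Q.pow2 (j + (m + 2))).set := by
  have hQ := Q.ℓ_pos
  refine box_subset_box h.abs_sub_le_left ?_
  have hside : 2 ^ j * R.ℓ ≤ 2 ^ j * (2 ^ m * Q.ℓ) := by gcongr; exact h.right_le
  have hshift : 2 ^ m * Q.ℓ ≤ 2 ^ j * (2 ^ m * Q.ℓ) :=
    le_mul_of_one_le_left (by positivity) (one_le_pow₀ one_le_two)
  have : 0 < 2 ^ j * (2 ^ m * Q.ℓ) := by positivity
  calc 2 ^ j * R.ℓ / 2 + 2 ^ m * Q.ℓ ≤ 2 ^ j * (2 ^ m * Q.ℓ) * 2 := by linarith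
    _ = 2 ^ (j + (m + 2)) * Q.ℓ / 2 := by ring

theorem Near.density_pow2_le (hg : GrowthBound μ n C₀) {m : ℕ} {Q R : CubeOf μ} (h : Q.Near m R)
    (j : ℕ) :
    (R.pow2 j).density n ≤ 2 ^ ((2 * m + 2) * n) * (Q.pow2 (j + (m + 2))).density n := by
  rw [pow_mul]
  refine density_le_of_subset hg (h.pow2_set_subset j) ?_
  calc 2 ^ (j + (m + 2)) * Q.ℓ ≤ 2 ^ (j + (m + 2)) * (2 ^ m * R.ℓ) := by gcongr; exact h.left_le
    _ = 2 ^ (2 * m + 2) * (R.pow2 j).ℓ := by rw [pow2_ℓ]; ring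

theorem Kcoef_nonneg (Q R : CubeOf μ) : 0 ≤ Kcoef n Q R :=
  add_nonneg zero_le_one (Finset.sum_nonneg fun _ _ => density_nonneg (Q.pow2 _))

theorem Kcoef_pow2_le (Q R : CubeOf μ) {j k : ℕ} (hjk : j < k) (hk : R.ℓ ≤ 2 ^ k * Q.ℓ) :
    Kcoef n (Q.pow2 j) R ≤ 1 + ∑ i ∈ Finset.range (k + 1), (Q.pow2 i).density n := by
  have hN : NQR (Q.pow2 j) R ≤ k - j := Nat.sInf_le ⟨by omega, by
    rwa [pow2_ℓ, ← mul_assoc, ← pow_add, Nat.sub_add_cancel hjk.le]⟩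
  calc Kcoef n (Q.pow2 j) R
      = 1 + ∑ i ∈ Finset.Icc 1 (NQR (Q.pow2 j) R), (Q.pow2 (j + i)).density n := by
        simp only [← pow2_pow2]
        rfl
    _ = 1 + ∑ i ∈ Finset.Icc (j + 1) (j + NQR (Q.pow2 j) R), (Q.pow2 i).density n := by
        rw [← Finset.map_add_left_Icc, Finset.sum_map]
        rfl
    _ ≤ 1 + ∑ i ∈ Finset.range (k + 1), (Q.pow2 i).density n := by
        gcongr
        · exact fun _ _ _ => density_nonneg _
        · intro i hi
          rw [Finset.mem_Icc] at hi
          rw [Finset.mem_range]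
          omega

theorem Near.refl (m : ℕ) (Q : CubeOf μ) : Q.Near m Q := by
  have hℓ : Q.ℓ ≤ 2 ^ m * Q.ℓ := le_mul_of_one_le_left Q.ℓ_pos.le (one_le_pow₀ one_le_two)
  have h₀ : ∀ i, |Q.c i - Q.c i| ≤ 2 ^ m * Q.ℓ := by simpa using fun _ => Q.ℓ_pos.le.trans hℓ
  exact ⟨hℓ, hℓ, h₀, h₀⟩

theorem Near.Kcoef_pow2_le (hg : GrowthBound μ n C₀) {m : ℕ} {Q R : CubeOf μ} (h : Q.Near m R)
    {j k : ℕ} (hjk : j < k) :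
    Kcoef n (R.pow2 j) (Q.pow2 k) ≤ 1 + 2 ^ ((2 * m + 2) * n) *
      ∑ i ∈ Finset.range (k + (2 * m + 3)), (Q.pow2 i).density n := by
  have hside : (Q.pow2 k).ℓ ≤ 2 ^ (k + m) * R.ℓ := by
    rw [pow2_ℓ, pow_add, mul_assoc]
    gcongr
    exact h.left_le
  calc Kcoef n (R.pow2 j) (Q.pow2 k)
      ≤ 1 + ∑ i ∈ Finset.range (k + m + 1), (R.pow2 i).density n :=
        R.Kcoef_pow2_le _ (by omega) hside
    _ ≤ 1 + ∑ i ∈ Finset.range (k + m + 1),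
          2 ^ ((2 * m + 2) * n) * (Q.pow2 (m + 2 + i)).density n := by
        gcongr with i
        exact add_comm i (m + 2) ▸ h.density_pow2_le hg i
    _ ≤ _ := by
        rw [← Finset.mul_sum, show k + (2 * m + 3) = m + 2 + (k + m + 1) by omega,
          Finset.sum_range_add _ (m + 2)]
        gcongr
        exact le_add_of_nonneg_left (Finset.sum_nonneg fun _ _ => density_nonneg _)

theorem sum_density_two_tildes_le (hg : GrowthBound μ n C₀) (hβ : 2 ^ n < βd) (Q : CubeOf μ)
    (p q : ℕ) :
    ∑ k ∈ Finset.range (tildeIdx μ βd Q + 1 + p +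
      (tildeIdx μ βd (Q.pow2 (tildeIdx μ βd Q + 1 + p)) + 1) + q), (Q.pow2 k).density n ≤
        (p + q + 2) * densityBound d n C₀ βd := by
  have hblock : ∀ j r : ℕ, ∑ k ∈ Finset.range r, (Q.pow2 (j + k)).density n ≤
      r * densityBound d n C₀ βd := fun j r => by
    simpa using Finset.sum_le_card_nsmul (Finset.range r) _ _
      fun k _ => density_le_densityBound hg hβ (Q.pow2 (j + k))
  have hsecond := sum_density_le_densityBound hg hβ (Q.pow2 (tildeIdx μ βd Q + 1 + p))
  simp only [pow2_pow2] at hsecond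
  rw [Finset.sum_range_add, Finset.sum_range_add _ _ (_ + 1), Finset.sum_range_add _ _ p]
  linarith [sum_density_le_densityBound hg hβ Q, hblock (tildeIdx μ βd Q + 1) p,
    hblock (tildeIdx μ βd Q + 1 + p +
      (tildeIdx μ βd (Q.pow2 (tildeIdx μ βd Q + 1 + p)) + 1)) q]

/-- A bound for the coefficients `K_{Q̃,S}` and `K_{R̃,S}` when `Q` and `R` are `m`-near and `S` is
a suitable doubling cube containing `Q̃` and `R̃`. -/
noncomputable def nearBound (d n : ℕ) (C₀ βd : ℝ) (m : ℕ) : ℝ :=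
  1 + 2 ^ ((2 * m + 2) * n) * ((3 * m + 5) * densityBound d n C₀ βd)

theorem nearBound_nonneg {d n : ℕ} {C₀ βd : ℝ} (hC₀ : 0 ≤ C₀) (hβ : 2 ^ n < βd) (m : ℕ) :
    0 ≤ nearBound d n C₀ βd m := by
  have hβ₀ : 0 < βd := lt_trans (by positivity) hβ
  have : 0 ≤ densityBound d n C₀ βd :=
    div_nonneg (by positivity) (sub_nonneg.2 ((div_le_one hβ₀).2 hβ.le))
  rw [nearBound]
  positivity

theorem Near.exists_isDoubling_superset_of_tildeIdx_le (hg : GrowthBound μ n C₀) (hβ : 2 ^ n < βd)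
    {m : ℕ} {Q R : CubeOf μ} (h : Q.Near m R) (hle : tildeIdx μ βd R ≤ tildeIdx μ βd Q) :
    ∃ S : CubeOf μ, IsDoubling μ 2 βd S ∧ (Q.tilde βd).set ⊆ S.set ∧ (R.tilde βd).set ⊆ S.set ∧
      Kcoef n (Q.tilde βd) S ≤ nearBound d n C₀ βd m ∧
      Kcoef n (R.tilde βd) S ≤ nearBound d n C₀ βd m := by
  set N := tildeIdx μ βd Q
  set k := N + 1 + (m + 1) + tildeIdx μ βd (Q.pow2 (N + 1 + (m + 1)))
  have hS : (Q.pow2 (N + 1 + (m + 1))).tilde βd = Q.pow2 k := pow2_pow2 ..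
  have hsum : ∑ i ∈ Finset.range (k + (2 * m + 3)), (Q.pow2 i).density n ≤
      (3 * m + 5) * densityBound d n C₀ βd := by
    rw [show k + (2 * m + 3) = N + 1 + (m + 1) +
        (tildeIdx μ βd (Q.pow2 (N + 1 + (m + 1))) + 1) + (2 * m + 2) by omega]
    refine (sum_density_two_tildes_le hg hβ Q (m + 1) (2 * m + 2)).trans_eq ?_
    push_cast
    ring
  have hK : ∀ P : CubeOf μ, Q.Near m P → tildeIdx μ βd P ≤ N →
      Kcoef n (P.tilde βd) (Q.pow2 k) ≤ nearBound d n C₀ βd m := fun P hP hPN => by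
    refine (hP.Kcoef_pow2_le hg (show tildeIdx μ βd P < k by omega)).trans ?_
    rw [nearBound]
    gcongr
  refine ⟨Q.pow2 k, hS ▸ isDoubling_tilde hg hβ _, Q.pow2_set_subset (by omega), ?_,
    hK Q (Near.refl m Q) le_rfl, hK R h hle⟩
  calc (R.tilde βd).set ⊆ (R.pow2 N).set := R.pow2_set_subset hle
    _ ⊆ (Q.pow2 (N + (m + 2))).set := h.pow2_set_subset N
    _ ⊆ (Q.pow2 k).set := Q.pow2_set_subset (by omega)

theorem Near.exists_isDoubling_superset (hg : GrowthBound μ n C₀) (hβ : 2 ^ n < βd)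
    {m : ℕ} {Q R : CubeOf μ} (h : Q.Near m R) :
    ∃ S : CubeOf μ, IsDoubling μ 2 βd S ∧ (Q.tilde βd).set ⊆ S.set ∧ (R.tilde βd).set ⊆ S.set ∧
      Kcoef n (Q.tilde βd) S ≤ nearBound d n C₀ βd m ∧
      Kcoef n (R.tilde βd) S ≤ nearBound d n C₀ βd m := by
  rcases le_total (tildeIdx μ βd R) (tildeIdx μ βd Q) with hle | hle
  · exact h.exists_isDoubling_superset_of_tildeIdx_le hg hβ hle
  · obtain ⟨S, hS, hR, hQ, hKR, hKQ⟩ :=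
      h.symm.exists_isDoubling_superset_of_tildeIdx_le hg hβ hle
    exact ⟨S, hS, hQ, hR, hKQ, hKR⟩

theorem Near.abs_mQ_tilde_sub_le (hg : GrowthBound μ n C₀) (hβ : 2 ^ n < βd)
    {f : Euc d → ℝ} {a : ℝ} (ha : 0 ≤ a) (hf : RBMOBoundWith μ n βd f (ENNReal.ofReal a)) {m : ℕ}
    {Q R : CubeOf μ} (h : Q.Near m R) :
    |mQ μ (Q.tilde βd) f - mQ μ (R.tilde βd) f| ≤ 2 * nearBound d n C₀ βd m * a := by
  obtain ⟨S, hS, hQS, hRS, hKQ, hKR⟩ := h.exists_isDoubling_superset hg hβ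
  have hdiff : ∀ P : CubeOf μ, IsDoubling μ 2 βd P → P.set ⊆ S.set →
      Kcoef n P S ≤ nearBound d n C₀ βd m →
      |mQ μ P f - mQ μ S f| ≤ a * nearBound d n C₀ βd m := fun P hP hPS hK => by
    have hbound := hf.2 P S hPS hP hS
    rw [← ENNReal.ofReal_mul ha,
      ENNReal.ofReal_le_ofReal_iff (mul_nonneg ha (Kcoef_nonneg P S))] at hbound
    exact hbound.trans (mul_le_mul_of_nonneg_left hK ha)
  have hQ := hdiff _ (isDoubling_tilde hg hβ Q) hQS hKQ
  have hR := hdiff _ (isDoubling_tilde hg hβ R) hRS hKR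
  rw [abs_sub_comm] at hR
  linarith [abs_sub_le (mQ μ (Q.tilde βd) f) (mQ μ S f) (mQ μ (R.tilde βd) f)]

end CubeOf

end Near

section Averages

theorem lintegral_ofReal_abs_sub_le {α : Type*} [MeasurableSpace α] {ν : Measure α} (f : α → ℝ)
    (c c' : ℝ) : ∫⁻ x, ENNReal.ofReal |f x - c'| ∂ν ≤
      ∫⁻ x, ENNReal.ofReal |f x - c| ∂ν + ENNReal.ofReal |c - c'| * ν univ := by
  rw [← lintegral_const, ← lintegral_add_right _ measurable_const]
  gcongr with x
  rw [← ENNReal.ofReal_add (abs_nonneg _) (abs_nonneg _)]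
  exact ENNReal.ofReal_le_ofReal (abs_sub_le _ _ _)

theorem ofReal_abs_setAverage_sub_mul_le {α : Type*} [MeasurableSpace α] {ν : Measure α}
    {s : Set α} (hs : ν s ≠ ⊤) {f : α → ℝ} (hf : IntegrableOn f s ν) (c : ℝ) :
    ENNReal.ofReal |⨍ x in s, f x ∂ν - c| * ν s ≤ ∫⁻ x in s, ENNReal.ofReal |f x - c| ∂ν := by
  have hconst : IntegrableOn (fun _ => c) s ν := integrableOn_const hs
  have hint : ∫ x in s, (f x - c) ∂ν = (⨍ x in s, f x ∂ν - c) * ν.real s := by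
    rw [integral_sub hf hconst, setIntegral_const, ← measure_smul_setAverage f hs, smul_eq_mul,
      smul_eq_mul]
    ring
  calc ENNReal.ofReal |⨍ x in s, f x ∂ν - c| * ν s
      = ENNReal.ofReal |∫ x in s, (f x - c) ∂ν| := by
        rw [hint, abs_mul, abs_of_nonneg measureReal_nonneg, ENNReal.ofReal_mul (abs_nonneg _),
          ofReal_measureReal hs]
    _ ≤ ENNReal.ofReal (∫ x in s, |f x - c| ∂ν) :=
        ENNReal.ofReal_le_ofReal abs_integral_le_integral_abs
    _ = ∫⁻ x in s, ENNReal.ofReal |f x - c| ∂ν :=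
        ofReal_integral_eq_lintegral_ofReal (hf.sub hconst).abs (ae_of_all _ fun _ => abs_nonneg _)

theorem isLocallyFiniteMeasure_map_homeomorph {X Y : Type*} [TopologicalSpace X]
    [MeasurableSpace X] [BorelSpace X] [TopologicalSpace Y] [MeasurableSpace Y] [BorelSpace Y]
    (e : X ≃ₜ Y) (μ : Measure X) [IsLocallyFiniteMeasure μ] :
    IsLocallyFiniteMeasure (μ.map e) := by
  refine ⟨fun y => ?_⟩
  obtain ⟨s, hs, hμs⟩ := μ.finiteAt_nhds (e.symm y)
  refine ⟨e.symm ⁻¹' s, e.symm.continuous.continuousAt hs, ?_⟩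
  rwa [e.measurableEmbedding.map_apply, ← preimage_comp, e.symm_comp_self, preimage_id]

variable {d : ℕ} {μ : Measure (Euc d)} {βd : ℝ}

theorem ae_tendsto_setAverage_box [IsLocallyFiniteMeasure μ] {f : Euc d → ℝ}
    (hf : LocallyIntegrable f μ) :
    ∀ᵐ x ∂μ, Filter.Tendsto (fun l => ⨍ y in box x l, f y ∂μ) (nhdsWithin 0 (Ioi 0))
      (nhds (f x)) := by
  -- Cubes are the balls of the sup norm, for which Besicovitch's differentiation theorem applies.
  set e := PiLp.homeomorph 2 (fun _ : Fin d => ℝ)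
  have he : MeasurePreserving e μ (μ.map e) := ⟨e.continuous.measurable, rfl⟩
  have := isLocallyFiniteMeasure_map_homeomorph e μ
  have hf' : LocallyIntegrable (f ∘ e.symm) (μ.map e) := by
    rwa [locallyIntegrable_map_homeomorph, comp_assoc, e.symm_comp_self, comp_id]
  filter_upwards [he.quasiMeasurePreserving.ae
    ((Besicovitch.vitaliFamily (μ.map e)).ae_tendsto_average hf')] with x hx
  have hhalf : Filter.Tendsto (fun l : ℝ => l / 2) (nhdsWithin 0 (Ioi 0))
      (nhdsWithin 0 (Ioi 0)) := by
    refine tendsto_nhdsWithin_iff.2 ⟨?_, ?_⟩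
    · simpa using ((continuous_id.div_const (2 : ℝ)).tendsto 0).mono_left nhdsWithin_le_nhds
    · filter_upwards [self_mem_nhdsWithin] with l hl using half_pos (mem_Ioi.1 hl)
  have hlim := (hx.comp (Besicovitch.tendsto_filterAt (μ.map e) (e x))).comp hhalf
  rw [comp_apply, e.symm_apply_apply] at hlim
  refine hlim.congr' ?_
  filter_upwards [self_mem_nhdsWithin] with l hl
  rw [comp_apply, comp_apply, box_eq_preimage_closedBall x (le_of_lt hl), setAverage_eq,
    setAverage_eq, ← he.setIntegral_preimage_emb e.measurableEmbedding, measureReal_def,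
    measureReal_def, he.measure_preimage_emb e.measurableEmbedding]
  simp [e]

theorem SmallDoublingAE.ae_exists_mQ_mem [IsLocallyFiniteMeasure μ] (hsd : SmallDoublingAE μ βd)
    {f : Euc d → ℝ} (hf : LocallyIntegrable f μ) :
    ∀ᵐ x ∂μ, ∀ U ∈ nhds (f x), ∀ ℓ₀ : ℝ, 0 < ℓ₀ →
      ∃ P : CubeOf μ, P.c = x ∧ P.ℓ < ℓ₀ ∧ IsDoubling μ 2 βd P ∧ mQ μ P f ∈ U := by
  filter_upwards [hsd, ae_tendsto_setAverage_box hf] with x hdbl hlim U hU ℓ₀ hℓ₀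
  obtain ⟨r, hr, hrU⟩ := mem_nhdsGT_iff_exists_Ioo_subset.1 (hlim hU)
  obtain ⟨P, rfl, hPℓ, hP⟩ := hdbl (min ℓ₀ r) (lt_min hℓ₀ hr)
  exact ⟨P, rfl, hPℓ.trans_le (min_le_left _ _), hP, hrU ⟨P.ℓ_pos, hPℓ.trans_le (min_le_right _ _)⟩⟩

theorem CubeOf.isCompact_set (Q : CubeOf μ) : IsCompact Q.set :=
  isCompact_of_isClosed_isBounded (isClosed_box _ _)
    (isBounded_ball.subset (box_subset_ball _ Q.ℓ_pos))

theorem CubeOf.lintegral_enlarged_box_le {f : Euc d → ℝ} {a ε : ℝ} (ha : 0 ≤ a)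
    (hosc : ∀ Q : CubeOf μ, ∫⁻ x in Q.set, ENNReal.ofReal |f x - mQ μ (Q.tilde βd) f| ∂μ ≤
      ENNReal.ofReal a * μ (Q.dil 2))
    (hnear : ∀ Q R : CubeOf μ, Q.Near 2 R →
      |mQ μ (Q.tilde βd) f - mQ μ (R.tilde βd) f| ≤ ε) (Q : CubeOf μ) :
    ∫⁻ x in box Q.c (5 / 4 * Q.ℓ), ENNReal.ofReal |f x - mQ μ (Q.tilde βd) f| ∂μ ≤
      ENNReal.ofReal (10 ^ d * (a + ε)) * μ (Q.dil 2) := by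
  have hℓ := Q.ℓ_pos
  have hε : 0 ≤ ε := (abs_nonneg _).trans (hnear Q Q (Near.refl 2 Q))
  have h10 : ENNReal.ofReal (10 ^ d * (a + ε)) * μ (Q.dil 2) =
      (10 : ℕ) ^ d * (ENNReal.ofReal (a + ε) * μ (Q.dil 2)) := by
    rw [ENNReal.ofReal_mul (by positivity), mul_assoc, ENNReal.ofReal_pow (by norm_num),
      ← ENNReal.ofReal_natCast, Nat.cast_ofNat]
  rw [h10]
  refine lintegral_box_le_of_forall_subbox (by positivity) (by norm_num) fun y hy hyQ => ?_
  let R : CubeOf μ := ⟨y, Q.ℓ / 4, by positivity, hy⟩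
  have hR : R.Near 2 Q :=
    { left_le := show Q.ℓ / 4 ≤ 2 ^ 2 * Q.ℓ by linarith
      right_le := show Q.ℓ ≤ 2 ^ 2 * (Q.ℓ / 4) by linarith
      abs_sub_le_left := fun i => (hyQ i).trans (show _ ≤ 2 ^ 2 * (Q.ℓ / 4) by linarith)
      abs_sub_le_right := fun i => (hyQ i).trans (by linarith) }
  have hRdil : R.dil 2 ⊆ Q.dil 2 :=
    box_subset_box (fun i => abs_sub_comm (R.c i) (Q.c i) ▸ hyQ i)
      (show 2 * (Q.ℓ / 4) / 2 + 5 / 4 * Q.ℓ / 2 ≤ 2 * Q.ℓ / 2 by linarith)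
  calc ∫⁻ x in box y (2 * (5 / 4 * Q.ℓ / (10 : ℕ))), ENNReal.ofReal |f x - mQ μ (Q.tilde βd) f| ∂μ
      = ∫⁻ x in R.set, ENNReal.ofReal |f x - mQ μ (Q.tilde βd) f| ∂μ := by
        rw [set_eq_box]
        congr 3
        push_cast
        ring
    _ ≤ ∫⁻ x in R.set, ENNReal.ofReal |f x - mQ μ (R.tilde βd) f| ∂μ +
          ENNReal.ofReal |mQ μ (R.tilde βd) f - mQ μ (Q.tilde βd) f| * μ R.set := by
        simpa using lintegral_ofReal_abs_sub_le (ν := μ.restrict R.set) f _ _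
    _ ≤ ENNReal.ofReal a * μ (R.dil 2) + ENNReal.ofReal ε * μ (R.dil 2) := by
        gcongr
        · exact hosc R
        · exact hnear R Q hR
        · exact R.set_subset_dil_two
    _ ≤ ENNReal.ofReal (a + ε) * μ (Q.dil 2) := by
        rw [← add_mul, ENNReal.ofReal_add ha hε]
        gcongr

end Averages

section Stopping

variable {d : ℕ} {μ : Measure (Euc d)} {βd : ℝ} {f : Euc d → ℝ} {B ε : ℝ}

namespace CubeOf

/-- The stopping condition in the proof of the John-Nirenberg inequality: `P` is a small doubling
cube centred in `Q` on which the mean of `f` is more than `B` away from `m_{Q̃} f`, but overshoots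
`B` by at most `2 * ε`, where `ε` bounds the change of the mean between nearby cubes. -/
structure IsStopping (βd : ℝ) (f : Euc d → ℝ) (B ε : ℝ) (Q P : CubeOf μ) : Prop where
  c_mem : P.c ∈ Q.set
  ℓ_le : P.ℓ ≤ Q.ℓ / 4
  isDoubling : IsDoubling μ 2 βd P
  lt_abs : B < |mQ μ P f - mQ μ (Q.tilde βd) f|
  abs_le : |mQ μ P f - mQ μ (Q.tilde βd) f| ≤ B + 2 * ε

theorem near_pow2 (Q : CubeOf μ) {j m : ℕ} (h : j ≤ m) : Q.Near m (Q.pow2 j) := by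
  have hℓ := Q.ℓ_pos
  have hj : Q.ℓ ≤ 2 ^ j * Q.ℓ := le_mul_of_one_le_left hℓ.le (one_le_pow₀ one_le_two)
  have hm : 2 ^ j * Q.ℓ ≤ 2 ^ m * (2 ^ j * Q.ℓ) :=
    le_mul_of_one_le_left (by positivity) (one_le_pow₀ one_le_two)
  refine ⟨hj.trans hm, ?_, fun i => ?_, fun i => ?_⟩
  · exact mul_le_mul_of_nonneg_right (pow_le_pow_right₀ one_le_two h) hℓ.le
  · simpa using hℓ.le
  · simpa using hℓ.le

theorem abs_mQ_tilde_sub_le_of_lt_tilde_ℓ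
    (hdbl : ∀ Q : CubeOf μ, IsDoubling μ 2 βd (Q.tilde βd))
    (hnear : ∀ Q R : CubeOf μ, Q.Near 2 R → |mQ μ (Q.tilde βd) f - mQ μ (R.tilde βd) f| ≤ ε)
    {Q R : CubeOf μ} (hc : R.c ∈ Q.set) (hR : R.ℓ ≤ Q.ℓ / 2) (hlt : Q.ℓ / 4 < (R.tilde βd).ℓ) :
    |mQ μ (R.tilde βd) f - mQ μ (Q.tilde βd) f| ≤ ε := by
  have hRℓ := R.ℓ_pos
  obtain ⟨k, hk, hk'⟩ := exists_nat_pow_near ((one_le_div hRℓ).2 hR) one_lt_two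
  rw [le_div_iff₀ hRℓ] at hk
  rw [div_lt_iff₀ hRℓ, pow_succ] at hk'
  have hkR : k ≤ tildeIdx μ βd R := by
    by_contra! hlt'
    have : 2 ^ (tildeIdx μ βd R + 1) * R.ℓ ≤ 2 ^ k * R.ℓ := by
      gcongr
      · exact one_le_two
      · exact hlt'
    rw [tilde, pow2_ℓ] at hlt
    rw [pow_succ] at this
    linarith
  rw [← tilde_pow2 (hdbl R) hkR]
  have hk2 : 2 ^ k * R.ℓ ≤ 2 ^ 2 * Q.ℓ := by linarith
  have hQ2 : Q.ℓ ≤ 2 ^ 2 * (2 ^ k * R.ℓ) := by linarith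
  exact hnear _ _ ⟨hk2, hQ2, fun i => (hc i).trans (show _ ≤ 2 ^ 2 * (2 ^ k * R.ℓ) by linarith),
    fun i => (hc i).trans (by linarith)⟩

theorem exists_isStopping (hdbl : ∀ Q : CubeOf μ, IsDoubling μ 2 βd (Q.tilde βd))
    (hnear : ∀ Q R : CubeOf μ, Q.Near 2 R → |mQ μ (Q.tilde βd) f - mQ μ (R.tilde βd) f| ≤ ε)
    (hB : 0 ≤ B) {Q P : CubeOf μ} (hc : P.c ∈ Q.set) (hℓ : P.ℓ ≤ Q.ℓ / 4)
    (hP : IsDoubling μ 2 βd P) (hPB : B < |mQ μ P f - mQ μ (Q.tilde βd) f|) :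
    ∃ S : CubeOf μ, S.c = P.c ∧ IsStopping βd f B ε Q S := by
  have hPℓ := P.ℓ_pos
  -- Stop at the largest admissible dilation of `P`: the next doubling one is no longer admissible.
  let G : Set ℕ := {k | (P.pow2 k).ℓ ≤ Q.ℓ / 4 ∧ IsDoubling μ 2 βd (P.pow2 k) ∧
    B < |mQ μ (P.pow2 k) f - mQ μ (Q.tilde βd) f|}
  have hG : G.Finite := by
    obtain ⟨K, hK⟩ := pow_unbounded_of_one_lt (Q.ℓ / 4 / P.ℓ) (one_lt_two (α := ℝ))
    refine (finite_lt_nat K).subset fun k hk => (pow_lt_pow_iff_right₀ (one_lt_two (α := ℝ))).1 ?_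
    exact ((le_div_iff₀ hPℓ).2 hk.1).trans_lt hK
  obtain ⟨k, ⟨hkℓ, hkdbl, hkB⟩, hkmax⟩ := hG.exists_maximal
    ⟨0, by rwa [pow2_zero], by rwa [pow2_zero], by rwa [pow2_zero]⟩
  refine ⟨P.pow2 k, rfl, hc, hkℓ, hkdbl, hkB, ?_⟩
  set R := P.pow2 (k + 1) with hR
  have hε : 0 ≤ ε := (abs_nonneg _).trans (hnear P P (Near.refl 2 P))
  have hparent : |mQ μ (P.pow2 k) f - mQ μ (R.tilde βd) f| ≤ ε := by
    have hPR : (P.pow2 k).pow2 1 = R := pow2_pow2 P k 1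
    have h := hnear (P.pow2 k) R (hPR ▸ near_pow2 _ one_le_two)
    rwa [tilde_eq_self hkdbl] at h
  have hancestor : |mQ μ (R.tilde βd) f - mQ μ (Q.tilde βd) f| ≤ B + ε := by
    rcases le_or_gt (R.tilde βd).ℓ (Q.ℓ / 4) with hle | hlt
    · have hRP : R.tilde βd = P.pow2 (k + 1 + tildeIdx μ βd R) := pow2_pow2 ..
      have hnot : ¬ B < |mQ μ (R.tilde βd) f - mQ μ (Q.tilde βd) f| := fun hlt => by
        have := hkmax (y := k + 1 + tildeIdx μ βd R) ⟨hRP ▸ hle, hRP ▸ hdbl R, hRP ▸ hlt⟩ (by omega)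
        omega
      linarith
    · have hRℓ : R.ℓ ≤ Q.ℓ / 2 := by
        rw [hR, pow2_ℓ, pow_succ]
        rw [pow2_ℓ] at hkℓ
        linarith
      linarith [abs_mQ_tilde_sub_le_of_lt_tilde_ℓ hdbl hnear (R := R) hc hRℓ hlt]
  linarith [abs_sub_le (mQ μ (P.pow2 k) f) (mQ μ (R.tilde βd) f) (mQ μ (Q.tilde βd) f)]

end CubeOf

end Stopping

section JohnNirenberg

/-- The number of disjoint subfamilies provided by the Besicovitch covering theorem for cubes
in `ℝ^d`, that is, for balls of the sup norm. -/
noncomputable def besicovitchNumber (d : ℕ) : ℕ :=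
  (HasBesicovitchCovering.no_satelliteConfig (α := Fin d → ℝ)).choose

theorem half_pow_floor_le_two_mul_exp (s : ℝ) :
    (1 / 2 : ℝ) ^ ⌊s⌋₊ ≤ 2 * Real.exp (-(Real.log 2 * s)) :=
  calc (1 / 2 : ℝ) ^ ⌊s⌋₊ = 2 * Real.exp (-(Real.log 2 * (⌊s⌋₊ + 1))) := by
        rw [← mul_neg_one, mul_assoc, ← Real.rpow_def_of_pos two_pos, mul_neg_one,
          Real.rpow_neg zero_le_two, Real.rpow_add_one two_ne_zero, Real.rpow_natCast]
        simp
    _ ≤ 2 * Real.exp (-(Real.log 2 * s)) := by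
        gcongr
        exact (Nat.lt_floor_add_one s).le

namespace CubeOf

variable {d : ℕ} {μ : Measure (Euc d)} {βd : ℝ} {f : Euc d → ℝ} {a B ε t : ℝ}

theorem exists_pairwiseDisjoint_covering_families {ι : Type*} (P : ι → CubeOf μ) {L : ℝ}
    (hL : ∀ j, (P j).ℓ ≤ L) :
    ∃ s : Fin (besicovitchNumber d) → Set ι,
      (∀ i, (s i).PairwiseDisjoint fun j => (P j).set) ∧ (∀ i, (s i).Countable) ∧
      ∀ j, ∃ i, ∃ k ∈ s i, (P j).c ∈ (P k).set := by
  obtain ⟨τ, hτ, hN⟩ := (HasBesicovitchCovering.no_satelliteConfig (α := Fin d → ℝ)).choose_spec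
  let q : Besicovitch.BallPackage ι (Fin d → ℝ) :=
    { c := fun j => PiLp.homeomorph 2 (fun _ : Fin d => ℝ) (P j).c
      r := fun j => (P j).ℓ / 2
      rpos := fun j => half_pos (P j).ℓ_pos
      r_bound := L / 2
      r_le := fun j => div_le_div_of_nonneg_right (hL j) zero_le_two }
  have hset : ∀ j, (P j).set =
      PiLp.homeomorph 2 (fun _ : Fin d => ℝ) ⁻¹' closedBall (q.c j) (q.r j) :=
    fun j => box_eq_preimage_closedBall _ (P j).ℓ_pos.le
  obtain ⟨s, hdisj, hcover⟩ := Besicovitch.exist_disjoint_covering_families hτ hN q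
  refine ⟨s, fun i j hj k hk hjk => ?_, fun i => ?_, fun j => ?_⟩
  · simp only [onFun, hset]
    exact (hdisj i hj hk hjk).preimage _
  · exact (hdisj i).countable_of_nonempty_interior fun j _ =>
      (nonempty_ball.2 (q.rpos j)).mono ball_subset_interior_closedBall
  · obtain ⟨i, k, hk, hjk⟩ : ∃ i, ∃ k ∈ s i, q.c j ∈ ball (q.c k) (q.r k) := by
      simpa only [mem_iUnion, exists_prop] using hcover ⟨j, rfl⟩
    refine ⟨i, k, hk, ?_⟩
    rw [hset]
    exact ball_subset_closedBall hjk

/-- The part of `Q` where `f` deviates from `m_{Q̃} f` by more than `t`. -/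
def oscSet (βd : ℝ) (f : Euc d → ℝ) (Q : CubeOf μ) (t : ℝ) : Set (Euc d) :=
  {x ∈ Q.set | t < |f x - mQ μ (Q.tilde βd) f|}

theorem oscSet_anti (Q : CubeOf μ) : Antitone (Q.oscSet βd f) :=
  fun _ _ hst _ hx => ⟨hx.1, hst.trans_lt hx.2⟩

theorem IsStopping.set_subset {Q P : CubeOf μ} (hP : IsStopping βd f B ε Q P) :
    P.set ⊆ box Q.c (5 / 4 * Q.ℓ) :=
  box_subset_box (fun i => abs_sub_comm (P.c i) (Q.c i) ▸ hP.c_mem i) (by linarith [hP.ℓ_le])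

theorem IsStopping.oscSet_inter_subset {Q P : CubeOf μ} (hP : IsStopping βd f B ε Q P) :
    Q.oscSet βd f (t + (B + 2 * ε)) ∩ P.set ⊆ P.oscSet βd f t := by
  rintro x ⟨⟨-, hx⟩, hxP⟩
  refine ⟨hxP, ?_⟩
  rw [tilde_eq_self hP.isDoubling]
  linarith [abs_sub_le (f x) (mQ μ P f) (mQ μ (Q.tilde βd) f), hP.abs_le]

theorem ae_exists_isStopping [IsLocallyFiniteMeasure μ] (hsd : SmallDoublingAE μ βd)
    (hf : LocallyIntegrable f μ) (hdbl : ∀ Q : CubeOf μ, IsDoubling μ 2 βd (Q.tilde βd))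
    (hnear : ∀ Q R : CubeOf μ, Q.Near 2 R → |mQ μ (Q.tilde βd) f - mQ μ (R.tilde βd) f| ≤ ε)
    (hB : 0 ≤ B) :
    ∀ᵐ x ∂μ, ∀ Q : CubeOf μ, x ∈ Q.oscSet βd f B → ∃ P, P.c = x ∧ IsStopping βd f B ε Q P := by
  filter_upwards [hsd.ae_exists_mQ_mem hf] with x hx Q ⟨hxQ, hxB⟩
  have hU : {y | B < |y - mQ μ (Q.tilde βd) f|} ∈ nhds (f x) :=
    (isOpen_lt continuous_const (by fun_prop)).mem_nhds hxB
  obtain ⟨P, rfl, hPℓ, hPdbl, hPB⟩ := hx _ hU (Q.ℓ / 4) (by linarith [Q.ℓ_pos])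
  exact exists_isStopping hdbl hnear hB hxQ hPℓ.le hPdbl hPB

theorem exists_isStopping_families [IsLocallyFiniteMeasure μ] (hsd : SmallDoublingAE μ βd)
    (hf : LocallyIntegrable f μ) (hdbl : ∀ Q : CubeOf μ, IsDoubling μ 2 βd (Q.tilde βd))
    (hnear : ∀ Q R : CubeOf μ, Q.Near 2 R → |mQ μ (Q.tilde βd) f - mQ μ (R.tilde βd) f| ≤ ε)
    (hB : 0 ≤ B) (Q : CubeOf μ) :
    ∃ s : Fin (besicovitchNumber d) → Set {P : CubeOf μ // IsStopping βd f B ε Q P},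
      (∀ i, (s i).PairwiseDisjoint fun P => P.1.set) ∧ (∀ i, (s i).Countable) ∧
      Q.oscSet βd f B ≤ᵐ[μ] ⋃ i, ⋃ P ∈ s i, P.1.set := by
  obtain ⟨s, hdisj, hcount, hcover⟩ := exists_pairwiseDisjoint_covering_families
    (Subtype.val : {P : CubeOf μ // IsStopping βd f B ε Q P} → CubeOf μ) (fun P => P.2.ℓ_le)
  refine ⟨s, hdisj, hcount, ?_⟩
  filter_upwards [ae_exists_isStopping hsd hf hdbl hnear hB] with x hx hxQ
  obtain ⟨P, rfl, hP⟩ := hx Q hxQ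
  obtain ⟨i, R, hR, hPR⟩ := hcover ⟨P, hP⟩
  exact mem_iUnion.2 ⟨i, mem_iUnion₂.2 ⟨R, hR, hPR⟩⟩

theorem tsum_measure_isStopping_le [IsLocallyFiniteMeasure μ] (hf : LocallyIntegrable f μ)
    (ha : 0 ≤ a)
    (hosc : ∀ Q : CubeOf μ, ∫⁻ x in Q.set, ENNReal.ofReal |f x - mQ μ (Q.tilde βd) f| ∂μ ≤
      ENNReal.ofReal a * μ (Q.dil 2))
    (hnear : ∀ Q R : CubeOf μ, Q.Near 2 R → |mQ μ (Q.tilde βd) f - mQ μ (R.tilde βd) f| ≤ ε)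
    {Q : CubeOf μ} {s : Set {P : CubeOf μ // IsStopping βd f B ε Q P}} (hs : s.Countable)
    (hdisj : s.PairwiseDisjoint fun P => P.1.set) :
    ENNReal.ofReal B * ∑' P : s, μ P.1.1.set ≤
      ENNReal.ofReal (10 ^ d * (a + ε)) * μ (Q.dil 2) := by
  have hmean : ∀ P : s, ENNReal.ofReal B * μ P.1.1.set ≤
      ∫⁻ x in P.1.1.set, ENNReal.ofReal |f x - mQ μ (Q.tilde βd) f| ∂μ := fun P => by
    have hcomp := P.1.1.isCompact_set
    refine le_trans ?_ (ofReal_abs_setAverage_sub_mul_le hcomp.measure_lt_top.ne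
      (hf.integrableOn_isCompact hcomp) _)
    gcongr
    exact P.1.2.lt_abs.le
  calc ENNReal.ofReal B * ∑' P : s, μ P.1.1.set
      ≤ ∑' P : s, ∫⁻ x in P.1.1.set, ENNReal.ofReal |f x - mQ μ (Q.tilde βd) f| ∂μ := by
        rw [← ENNReal.tsum_mul_left]
        exact ENNReal.tsum_le_tsum hmean
    _ = ∫⁻ x in ⋃ P ∈ s, P.1.set, ENNReal.ofReal |f x - mQ μ (Q.tilde βd) f| ∂μ :=
        (lintegral_biUnion hs (fun P _ => P.1.measurableSet_set) hdisj _).symm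
    _ ≤ ∫⁻ x in box Q.c (5 / 4 * Q.ℓ), ENNReal.ofReal |f x - mQ μ (Q.tilde βd) f| ∂μ :=
        lintegral_mono_set (iUnion₂_subset fun P _ => P.2.set_subset)
    _ ≤ ENNReal.ofReal (10 ^ d * (a + ε)) * μ (Q.dil 2) :=
        lintegral_enlarged_box_le ha hosc hnear Q

theorem measure_oscSet_add_le [IsLocallyFiniteMeasure μ] (hsd : SmallDoublingAE μ βd)
    (hf : LocallyIntegrable f μ) (ha : 0 ≤ a)
    (hosc : ∀ Q : CubeOf μ, ∫⁻ x in Q.set, ENNReal.ofReal |f x - mQ μ (Q.tilde βd) f| ∂μ ≤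
      ENNReal.ofReal a * μ (Q.dil 2))
    (hdbl : ∀ Q : CubeOf μ, IsDoubling μ 2 βd (Q.tilde βd))
    (hnear : ∀ Q R : CubeOf μ, Q.Near 2 R → |mQ μ (Q.tilde βd) f - mQ μ (R.tilde βd) f| ≤ ε)
    (hB : 0 ≤ B) (ht : 0 ≤ t) {q : ℝ≥0∞}
    (hq : ∀ P : CubeOf μ, μ (P.oscSet βd f t) ≤ q * μ (P.dil 2)) (Q : CubeOf μ) :
    ENNReal.ofReal B * μ (Q.oscSet βd f (t + (B + 2 * ε))) ≤
      besicovitchNumber d * (q * ENNReal.ofReal βd *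
        (ENNReal.ofReal (10 ^ d * (a + ε)) * μ (Q.dil 2))) := by
  have hε : 0 ≤ ε := (abs_nonneg _).trans (hnear Q Q (Near.refl 2 Q))
  set E := Q.oscSet βd f (t + (B + 2 * ε))
  obtain ⟨s, hdisj, hcount, hcover⟩ := exists_isStopping_families hsd hf hdbl hnear hB Q
  have hE : E ≤ᵐ[μ] ⋃ i, ⋃ P ∈ s i, E ∩ P.1.set := by
    filter_upwards [hcover] with x hx hxE
    simp only [← inter_iUnion]
    exact ⟨hxE, hx (Q.oscSet_anti (by linarith) hxE)⟩
  have hcube : ∀ P : {P : CubeOf μ // IsStopping βd f B ε Q P},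
      μ (E ∩ P.1.set) ≤ q * ENNReal.ofReal βd * μ P.1.set := fun P =>
    calc μ (E ∩ P.1.set) ≤ μ (P.1.oscSet βd f t) := measure_mono P.2.oscSet_inter_subset
      _ ≤ q * μ (P.1.dil 2) := hq P.1
      _ ≤ q * ENNReal.ofReal βd * μ P.1.set := by
        rw [mul_assoc]
        gcongr
        exact P.2.isDoubling
  have hfamily : ∀ i, ENNReal.ofReal B * μ (⋃ P ∈ s i, E ∩ P.1.set) ≤
      q * ENNReal.ofReal βd * (ENNReal.ofReal (10 ^ d * (a + ε)) * μ (Q.dil 2)) := fun i =>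
    calc ENNReal.ofReal B * μ (⋃ P ∈ s i, E ∩ P.1.set)
        ≤ ENNReal.ofReal B * ∑' P : s i, q * ENNReal.ofReal βd * μ P.1.1.set := by
          gcongr
          exact (measure_biUnion_le μ (hcount i) _).trans
            (ENNReal.tsum_le_tsum fun P => hcube P.1)
      _ = q * ENNReal.ofReal βd * (ENNReal.ofReal B * ∑' P : s i, μ P.1.1.set) := by
          rw [ENNReal.tsum_mul_left, mul_left_comm]
      _ ≤ _ := by
          exact mul_le_mul' le_rfl
            (tsum_measure_isStopping_le hf ha hosc hnear (hcount i) (hdisj i))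
  calc ENNReal.ofReal B * μ E
      ≤ ENNReal.ofReal B * ∑ i, μ (⋃ P ∈ s i, E ∩ P.1.set) := by
        gcongr
        exact (measure_mono_ae hE).trans (measure_iUnion_fintype_le μ _)
    _ ≤ ∑ _i : Fin (besicovitchNumber d), q * ENNReal.ofReal βd *
          (ENNReal.ofReal (10 ^ d * (a + ε)) * μ (Q.dil 2)) := by
        rw [Finset.mul_sum]
        exact Finset.sum_le_sum fun i _ => hfamily i
    _ = _ := by rw [Finset.sum_const, Finset.card_univ, Fintype.card_fin, nsmul_eq_mul]

theorem measure_oscSet_nat_mul_le [IsLocallyFiniteMeasure μ] (hsd : SmallDoublingAE μ βd)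
    (hf : LocallyIntegrable f μ) (ha : 0 ≤ a)
    (hosc : ∀ Q : CubeOf μ, ∫⁻ x in Q.set, ENNReal.ofReal |f x - mQ μ (Q.tilde βd) f| ∂μ ≤
      ENNReal.ofReal a * μ (Q.dil 2))
    (hdbl : ∀ Q : CubeOf μ, IsDoubling μ 2 βd (Q.tilde βd))
    (hnear : ∀ Q R : CubeOf μ, Q.Near 2 R → |mQ μ (Q.tilde βd) f - mQ μ (R.tilde βd) f| ≤ ε)
    (hβ : 0 ≤ βd) (hB : 0 < B) (hB' : 2 * besicovitchNumber d * βd * (10 ^ d * (a + ε)) ≤ B)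
    (k : ℕ) (Q : CubeOf μ) :
    μ (Q.oscSet βd f (k * (B + 2 * ε))) ≤ ENNReal.ofReal ((1 / 2) ^ k) * μ (Q.dil 2) := by
  have hε : 0 ≤ ε := (abs_nonneg _).trans (hnear Q Q (Near.refl 2 Q))
  induction k generalizing Q with
  | zero =>
    rw [pow_zero, ENNReal.ofReal_one, one_mul]
    exact measure_mono ((sep_subset _ _).trans Q.set_subset_dil_two)
  | succ k ih =>
    have hBne : ENNReal.ofReal B ≠ 0 := (ENNReal.ofReal_pos.2 hB).ne'
    rw [← ENNReal.mul_le_mul_iff_right hBne ENNReal.ofReal_ne_top, Nat.cast_succ, add_one_mul]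
    refine (measure_oscSet_add_le hsd hf ha hosc hdbl hnear hB.le (by positivity) ih Q).trans ?_
    rw [← mul_assoc, ← mul_assoc, ← mul_assoc, ← mul_assoc, ← ENNReal.ofReal_natCast,
      ← ENNReal.ofReal_mul (by positivity), ← ENNReal.ofReal_mul hB.le,
      ← ENNReal.ofReal_mul (by positivity), ← ENNReal.ofReal_mul (by positivity)]
    refine mul_le_mul' (ENNReal.ofReal_le_ofReal ?_) le_rfl
    calc besicovitchNumber d * (1 / 2) ^ k * βd * (10 ^ d * (a + ε))
        = (1 / 2) ^ (k + 1) * (2 * besicovitchNumber d * βd * (10 ^ d * (a + ε))) := by ring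
      _ ≤ (1 / 2) ^ (k + 1) * B := by gcongr
      _ = B * (1 / 2) ^ (k + 1) := mul_comm _ _

theorem exists_measure_oscSet_le_exp (d n : ℕ) {C₀ βd : ℝ} (hC₀ : 0 ≤ C₀) (hβ : 2 ^ n < βd) :
    ∃ c > 0, ∀ μ : Measure (Euc d), GrowthBound μ n C₀ → SmallDoublingAE μ βd →
      ∀ f : Euc d → ℝ, LocallyIntegrable f μ →
      ∀ a > 0, RBMOBoundWith μ n βd f (ENNReal.ofReal a) → ∀ (Q : CubeOf μ) (t : ℝ), 0 ≤ t →
        μ (Q.oscSet βd f t) ≤ ENNReal.ofReal (2 * Real.exp (-(c / a * t))) * μ (Q.dil 2) := by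
  have hβ₀ : 0 < βd := lt_trans (by positivity) hβ
  have hκ := nearBound_nonneg (d := d) hC₀ hβ 2
  set κ := nearBound d n C₀ βd 2
  set b : ℝ := 2 * besicovitchNumber d * βd * (10 ^ d * (1 + 2 * κ)) + 1 with hb
  have : 0 < b + 2 * (2 * κ) := by positivity
  refine ⟨Real.log 2 / (b + 2 * (2 * κ)), by positivity, fun μ hg hsd f hf a ha hfa Q t ht => ?_⟩
  have := hg.isLocallyFiniteMeasure
  set k := ⌊t / ((b + 2 * (2 * κ)) * a)⌋₊
  have hk : k * (b * a + 2 * (2 * κ * a)) ≤ t := by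
    have := (le_div_iff₀ (by positivity)).1 (Nat.floor_le (a := t / ((b + 2 * (2 * κ)) * a))
      (by positivity))
    linarith
  calc μ (Q.oscSet βd f t)
      ≤ μ (Q.oscSet βd f (k * (b * a + 2 * (2 * κ * a)))) := measure_mono (Q.oscSet_anti hk)
    _ ≤ ENNReal.ofReal ((1 / 2) ^ k) * μ (Q.dil 2) :=
        measure_oscSet_nat_mul_le hsd hf ha.le hfa.1 (isDoubling_tilde hg hβ)
          (fun _ _ h => h.abs_mQ_tilde_sub_le hg hβ ha.le hfa) hβ₀.le (by positivity)
          (by rw [hb]; linarith) k Q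
    _ ≤ ENNReal.ofReal (2 * Real.exp (-(Real.log 2 / (b + 2 * (2 * κ)) / a * t))) *
          μ (Q.dil 2) := by
        have hrate : Real.log 2 / (b + 2 * (2 * κ)) / a * t =
            Real.log 2 * (t / ((b + 2 * (2 * κ)) * a)) := by field_simp
        rw [hrate]
        gcongr
        exact half_pow_floor_le_two_mul_exp _

end CubeOf

end JohnNirenberg

section PowerIntegrals

theorem lintegral_le_of_lintegral_rpow_le {α : Type*} [MeasurableSpace α] {ν : Measure α}
    {g : α → ℝ≥0∞} (hg : AEMeasurable g ν) {p : ℝ} (hp : 1 ≤ p) {C M : ℝ≥0∞} (hν : ν univ ≤ M)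
    (h : ∫⁻ x, g x ^ p ∂ν ≤ C ^ p * M) : ∫⁻ x, g x ∂ν ≤ C * M := by
  have hp₀ : 0 < p := one_pos.trans_le hp
  have hp' : 0 ≤ 1 - 1 / p := sub_nonneg.2 ((div_le_one hp₀).2 hp)
  calc ∫⁻ x, g x ∂ν ≤ (∫⁻ x, g x ^ p ∂ν) ^ (1 / p) * ν univ ^ (1 - 1 / p) := by
        simpa [eLpNorm'] using eLpNorm'_le_eLpNorm'_mul_rpow_measure_univ one_pos hp
          hg.aestronglyMeasurable
    _ ≤ (C ^ p * M) ^ (1 / p) * M ^ (1 - 1 / p) := by gcongr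
    _ = C * M := by
        rw [ENNReal.mul_rpow_of_nonneg _ _ (by positivity), ← ENNReal.rpow_mul,
          mul_one_div_cancel hp₀.ne', ENNReal.rpow_one, mul_assoc,
          ← ENNReal.rpow_add_of_nonneg _ _ (by positivity) hp', add_sub_cancel, ENNReal.rpow_one]

theorem lintegral_ofReal_rpow_le_of_measure_lt_le_exp {α : Type*} [MeasurableSpace α]
    {ν : Measure α} {g : α → ℝ} (hg₀ : 0 ≤ᵐ[ν] g) (hg : AEMeasurable g ν) {p c K : ℝ} (hp : 0 < p)
    (hc : 0 < c) (hK : 0 ≤ K) {M : ℝ≥0∞}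
    (h : ∀ t, 0 < t → ν {x | t < g x} ≤ ENNReal.ofReal (K * Real.exp (-(c * t))) * M) :
    ∫⁻ x, ENNReal.ofReal (g x) ^ p ∂ν ≤
      ENNReal.ofReal (K * Real.Gamma (p + 1) * (1 / c) ^ p) * M := by
  have hexp : ∀ t ∈ Ioi (0 : ℝ), 0 ≤ t ^ (p - 1) * Real.exp (-(c * t)) := fun t ht =>
    mul_nonneg (Real.rpow_nonneg (le_of_lt ht) _) (Real.exp_nonneg _)
  have hΓ : ∫ t in Ioi 0, t ^ (p - 1) * Real.exp (-(c * t)) = (1 / c) ^ p * Real.Gamma p :=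
    Real.integral_rpow_mul_exp_neg_mul_Ioi hp hc
  have hint : IntegrableOn (fun t => t ^ (p - 1) * Real.exp (-(c * t))) (Ioi 0) :=
    .of_integral_ne_zero (hΓ ▸ (mul_pos (by positivity) (Real.Gamma_pos_of_pos hp)).ne')
  calc ∫⁻ x, ENNReal.ofReal (g x) ^ p ∂ν
      = ∫⁻ x, ENNReal.ofReal (g x ^ p) ∂ν :=
        lintegral_congr_ae (hg₀.mono fun x hx => ENNReal.ofReal_rpow_of_nonneg hx hp.le)
    _ = ENNReal.ofReal p * ∫⁻ t in Ioi 0, ν {x | t < g x} * ENNReal.ofReal (t ^ (p - 1)) :=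
        lintegral_rpow_eq_lintegral_meas_lt_mul ν hg₀ hg hp
    _ ≤ ENNReal.ofReal p * ∫⁻ t in Ioi 0,
          ENNReal.ofReal K * M * ENNReal.ofReal (t ^ (p - 1) * Real.exp (-(c * t))) := by
        refine mul_le_mul' le_rfl (setLIntegral_mono' measurableSet_Ioi fun t ht => ?_)
        refine (mul_le_mul' (h t ht) le_rfl).trans_eq ?_
        rw [ENNReal.ofReal_mul hK, ENNReal.ofReal_mul (Real.rpow_nonneg (le_of_lt ht) _)]
        ring
    _ = ENNReal.ofReal p *
          (ENNReal.ofReal K * M * ENNReal.ofReal ((1 / c) ^ p * Real.Gamma p)) := by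
        rw [lintegral_const_mul _ (by fun_prop), ← hΓ, ofReal_integral_eq_lintegral_ofReal hint
          ((ae_restrict_iff' measurableSet_Ioi).2 (ae_of_all _ hexp))]
    _ = ENNReal.ofReal (K * Real.Gamma (p + 1) * (1 / c) ^ p) * M := by
        rw [mul_right_comm (ENNReal.ofReal K), ← mul_assoc, ← ENNReal.ofReal_mul hK,
          ← ENNReal.ofReal_mul hp.le, Real.Gamma_add_one hp.ne']
        ring_nf

end PowerIntegrals

section NormComparison

variable {d n : ℕ} {μ : Measure (Euc d)} {C₀ βd p a c : ℝ} {f : Euc d → ℝ}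

theorem CubeOf.aemeasurable_abs_sub (hf : LocallyIntegrable f μ) (Q : CubeOf μ) (b : ℝ) :
    AEMeasurable (fun x => |f x - b|) (μ.restrict Q.set) :=
  (hf.aestronglyMeasurable.aemeasurable.restrict.sub_const b).abs

theorem rbmoNorm_le_rbmoPNorm (hp : 1 ≤ p) (hf : LocallyIntegrable f μ) :
    rbmoNorm μ n βd f ≤ rbmoPNorm μ n βd p f := by
  refine le_sInf fun C hC => sInf_le ⟨fun Q => ?_, hC.2⟩
  refine lintegral_le_of_lintegral_rpow_le (Q.aemeasurable_abs_sub hf _).ennreal_ofReal hp ?_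
    (hC.1 Q)
  rw [Measure.restrict_apply_univ]
  exact measure_mono Q.set_subset_dil_two

theorem RBMOBoundWith.mono {C C' : ℝ≥0∞} (h : RBMOBoundWith μ n βd f C) (hC : C ≤ C') :
    RBMOBoundWith μ n βd f C' :=
  ⟨fun Q => (h.1 Q).trans (mul_le_mul' hC le_rfl),
    fun Q R hQR hQ hR => (h.2 Q R hQR hQ hR).trans (mul_le_mul' hC le_rfl)⟩

theorem RBMOBoundWith.rbmopBoundWith (hp : 0 < p) (hf : LocallyIntegrable f μ) (ha : 0 < a)
    (hc : 0 < c) (hfa : RBMOBoundWith μ n βd f (ENNReal.ofReal a))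
    (hexp : ∀ (Q : CubeOf μ) (t : ℝ), 0 ≤ t →
      μ (Q.oscSet βd f t) ≤ ENNReal.ofReal (2 * Real.exp (-(c / a * t))) * μ (Q.dil 2)) :
    RBMOpBoundWith μ n βd p f
      (ENNReal.ofReal (max 1 ((2 * Real.Gamma (p + 1)) ^ (1 / p) / c) * a)) := by
  have : 0 < Real.Gamma (p + 1) := Real.Gamma_pos_of_pos (by positivity)
  refine ⟨fun Q => ?_, (hfa.mono (ENNReal.ofReal_le_ofReal ?_)).2⟩
  · refine (lintegral_ofReal_rpow_le_of_measure_lt_le_exp (ae_of_all _ fun _ => abs_nonneg _)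
      (Q.aemeasurable_abs_sub hf _) hp (div_pos hc ha) zero_le_two (M := μ (Q.dil 2))
      fun t ht => ?_).trans (mul_le_mul' ?_ le_rfl)
    · rw [Measure.restrict_apply' Q.measurableSet_set, inter_comm]
      exact hexp Q t ht.le
    · rw [ENNReal.ofReal_rpow_of_nonneg (by positivity) hp.le]
      refine ENNReal.ofReal_le_ofReal ?_
      calc 2 * Real.Gamma (p + 1) * (1 / (c / a)) ^ p
          = ((2 * Real.Gamma (p + 1)) ^ (1 / p) / c * a) ^ p := by
            rw [div_mul_eq_mul_div, mul_div_assoc, Real.mul_rpow (by positivity) (by positivity),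
              ← Real.rpow_mul (by positivity), one_div_mul_cancel hp.ne', Real.rpow_one,
              one_div_div]
        _ ≤ _ := by
            gcongr
            exact le_max_right _ _
  · exact le_mul_of_one_le_left ha.le (le_max_left _ _)

theorem exists_rbmoPNorm_le (d n : ℕ) (hC₀ : 0 ≤ C₀) (hβ : 2 ^ n < βd) (hp : 0 < p) :
    ∃ C : ℝ, 1 ≤ C ∧ ∀ μ : Measure (Euc d), GrowthBound μ n C₀ → SmallDoublingAE μ βd →
      ∀ f : Euc d → ℝ, LocallyIntegrable f μ →
        rbmoPNorm μ n βd p f ≤ ENNReal.ofReal C * rbmoNorm μ n βd f := by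
  obtain ⟨c, hc, hexp⟩ := CubeOf.exists_measure_oscSet_le_exp d n hC₀ hβ
  set C := max 1 ((2 * Real.Gamma (p + 1)) ^ (1 / p) / c)
  have hC : 1 ≤ C := le_max_left _ _
  refine ⟨C, hC, fun μ hg hsd f hf => ?_⟩
  have hC_ne : ENNReal.ofReal C ≠ 0 := (ENNReal.ofReal_pos.2 (one_pos.trans_le hC)).ne'
  rw [mul_comm, ← ENNReal.div_le_iff hC_ne ENNReal.ofReal_ne_top]
  refine le_of_forall_gt_imp_ge_of_dense fun s hs => ?_
  rcases eq_or_ne s ⊤ with rfl | hs_top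
  · exact le_top
  have ha : 0 < s.toReal := ENNReal.toReal_pos hs.ne_bot hs_top
  obtain ⟨C', hC', hC's⟩ := sInf_lt_iff.1 hs
  have hfa : RBMOBoundWith μ n βd f (ENNReal.ofReal s.toReal) :=
    hC'.mono (hC's.le.trans_eq (ENNReal.ofReal_toReal hs_top).symm)
  rw [ENNReal.div_le_iff hC_ne ENNReal.ofReal_ne_top, mul_comm]
  calc rbmoPNorm μ n βd p f ≤ ENNReal.ofReal (C * s.toReal) :=
        sInf_le (hfa.rbmopBoundWith hp hf ha hc (hexp μ hg hsd f hf _ ha hfa))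
    _ = ENNReal.ofReal C * s := by
        rw [ENNReal.ofReal_mul (by positivity), ENNReal.ofReal_toReal hs_top]

end NormComparison

/-- Corollary 3.5: the spaces `RBMO^p(μ)`, `p ∈ [1,∞)`, all coincide with `RBMO(μ)`,
with equivalent norms. -/
theorem statement6 (d n : ℕ) (hn : 1 ≤ n) (hnd : n ≤ d) (C₀ βd p : ℝ)
    (hC₀ : 0 < C₀) (hβ : (2 : ℝ) ^ n < βd) (hp : 1 ≤ p) :
    ∃ C : ℝ, 1 ≤ C ∧ ∀ μ : MeasureTheory.Measure (Euc d), GrowthBound μ n C₀ →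
      SmallDoublingAE μ βd →
      ∀ f : Euc d → ℝ, MeasureTheory.LocallyIntegrable f μ →
        rbmoNorm μ n βd f ≤ ENNReal.ofReal C * rbmoPNorm μ n βd p f ∧
        rbmoPNorm μ n βd p f ≤ ENNReal.ofReal C * rbmoNorm μ n βd f := by
  obtain ⟨C, hC, hle⟩ := exists_rbmoPNorm_le d n hC₀.le hβ (one_pos.trans_le hp)
  refine ⟨C, hC, fun μ hg hsd f hf => ⟨?_, hle μ hg hsd f hf⟩⟩
  exact (rbmoNorm_le_rbmoPNorm hp hf).trans
    (le_mul_of_one_le_left zero_le (ENNReal.one_le_ofReal.2 hC))
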